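/- Let q be a braiding matrix with connected Dynkin diagram such that B_q is finite dimensional, and let B be a pre-Nichols algebra of q with finite GKdim. Let i,j,k ∈ I_θ be such that q_{kk} = q_{jj} = q̃_{ij}^{−1} = q̃_{jk}^{−1} ∈ G_9', q̃_{ik} = 1 and q_{ii} = q_{kk}^6. Then [[x_{iij}, x_{iijk}]_c, x_{ij}]_c = 0 in B. -/

import Mathlib

/-
Common framework for formalizing statements from
"Finite GK-dimensional pre-Nichols algebras of (super)modular and unidentified type"
(Angiono, Campagnolo, Sanmarco).

We work over `ℂ` (an algebraically closed field of characteristic zero).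
A braiding matrix is `q : Fin θ → Fin θ → ℂˣ`.  The tensor algebra `T(V)` of the
associated braided vector space of diagonal type is realized as the free algebra
on `Fin θ`.  The braided bialgebra structure on `T(V)` (the braided coproduct,
uniquely determined by the braiding matrix) is packaged in the structure
`BraidedStr`: its fields characterize it uniquely, so quantifying over
`S : BraidedStr θ q` is equivalent to using "the" braided coproduct.

A pre-Nichols algebra of `q` is the quotient `T(V)/I` by an ℕ₀-homogeneous
(two-sided) braided bi-ideal `I` generated in degrees ≥ 2 (`IsPreNicholsIdeal`);
such an ideal is automatically contained in the defining ideal `Jq` of the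
Nichols algebra, which is the largest such ideal.  A statement
"`x = 0` holds in the pre-Nichols algebra `T(V)/I`" is formalized as `x ∈ I`.
-/

open scoped TensorProduct

noncomputable section

namespace PreNicholsPaper

/-- The tensor algebra `T(V)` of the braided vector space of diagonal type of rank `θ`. -/
abbrev TV (θ : ℕ) := FreeAlgebra ℂ (Fin θ)

/-- The generator `x_i` of `T(V)`. -/
def gen (θ : ℕ) (i : Fin θ) : TV θ := FreeAlgebra.ι ℂ i

/-- The monomial `x_{i_1} ⋯ x_{i_n}` associated to a word. -/
def wordElem (θ : ℕ) (w : List (Fin θ)) : TV θ := (w.map (gen θ)).prod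

/-- The multidegree in `ℕ₀^θ` of a word. -/
def degW (θ : ℕ) (w : List (Fin θ)) : Fin θ → ℕ := fun i => w.count i

/-- `α_i`, the `i`-th canonical basis vector of `ℕ₀^θ`. -/
def δ (θ : ℕ) (i : Fin θ) : Fin θ → ℕ := fun k => if k = i then 1 else 0

/-- The bilinear form `ℕ₀^θ × ℕ₀^θ → ℂˣ` attached to the braiding matrix,
`q(α_i, α_j) = q_{ij}`, evaluated in `ℂ`. -/
def qf {θ : ℕ} (q : Fin θ → Fin θ → ℂˣ) (a b : Fin θ → ℕ) : ℂ :=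
  ∏ i : Fin θ, ∏ j : Fin θ, (q i j : ℂ) ^ (a i * b j)

/-- `q̃_{ij} = q_{ij} q_{ji}`. -/
def qtil {θ : ℕ} (q : Fin θ → Fin θ → ℂˣ) (i j : Fin θ) : ℂ := (q i j : ℂ) * (q j i : ℂ)

/-- The braided commutator `[u,v]_c = uv - q(a,b) vu` of elements `u, v`
which are homogeneous of multidegrees `a`, `b` respectively. -/
def brk {θ : ℕ} (q : Fin θ → Fin θ → ℂˣ) (a b : Fin θ → ℕ) (u v : TV θ) : TV θ :=
  u * v - qf q a b • (v * u)

/-- `(ad_c x_i) y = x_i y - q(α_i, b) y x_i` for `y` homogeneous of multidegree `b`. -/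
def ad1 {θ : ℕ} (q : Fin θ → Fin θ → ℂˣ) (i : Fin θ) (b : Fin θ → ℕ) (y : TV θ) : TV θ :=
  brk q (δ θ i) b (gen θ i) y

/-- The iterated braided adjoint `x_{i_1 i_2 ⋯ i_k} = (ad_c x_{i_1}) x_{i_2 ⋯ i_k}`. -/
def xw {θ : ℕ} (q : Fin θ → Fin θ → ℂˣ) : List (Fin θ) → TV θ
  | [] => 1
  | [i] => gen θ i
  | i :: w => ad1 q i (degW θ w) (xw q w)

/-- `(ad_c x_i)^m x_j`. -/
def adpow {θ : ℕ} (q : Fin θ → Fin θ → ℂˣ) (i j : Fin θ) : ℕ → TV θ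
  | 0 => gen θ j
  | m + 1 => ad1 q i (fun k => m * δ θ i k + δ θ j k) (adpow q i j m)

/-- The homogeneous component of total degree `n` of `T(V)`. -/
def homogTot (θ : ℕ) (n : ℕ) : Submodule ℂ (TV θ) :=
  Submodule.span ℂ {x | ∃ w : List (Fin θ), w.length = n ∧ x = wordElem θ w}

/-- The homogeneous component of multidegree `d ∈ ℕ₀^θ` of `T(V)`. -/
def homogD (θ : ℕ) (d : Fin θ → ℕ) : Submodule ℂ (TV θ) :=
  Submodule.span ℂ {x | ∃ w : List (Fin θ), degW θ w = d ∧ x = wordElem θ w}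

/-- The braided bialgebra structure on `T(V)` determined by the braiding matrix `q`:
the braided coproduct `Δ` together with the multiplication `mulB` of the braided
tensor product `T(V) ⊗ T(V)`.  These axioms determine `Δ` and `mulB` uniquely. -/
structure BraidedStr (θ : ℕ) (q : Fin θ → Fin θ → ℂˣ) where
  Δ : TV θ →ₗ[ℂ] TensorProduct ℂ (TV θ) (TV θ)
  mulB : TensorProduct ℂ (TV θ) (TV θ) →ₗ[ℂ]
    TensorProduct ℂ (TV θ) (TV θ) →ₗ[ℂ] TensorProduct ℂ (TV θ) (TV θ)
  mulB_spec : ∀ (a d : TV θ) (wb wc : List (Fin θ)),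
    mulB (a ⊗ₜ[ℂ] wordElem θ wb) (wordElem θ wc ⊗ₜ[ℂ] d)
      = qf q (degW θ wb) (degW θ wc) • ((a * wordElem θ wc) ⊗ₜ[ℂ] (wordElem θ wb * d))
  Δ_one : Δ 1 = 1 ⊗ₜ[ℂ] 1
  Δ_gen : ∀ i, Δ (gen θ i) = gen θ i ⊗ₜ[ℂ] 1 + 1 ⊗ₜ[ℂ] gen θ i
  Δ_mul : ∀ u v : TV θ, Δ (u * v) = mulB (Δ u) (Δ v)

variable {θ : ℕ} {q : Fin θ → Fin θ → ℂˣ}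

/-- `x` is a primitive element. -/
def IsPrimitiveIn (S : BraidedStr θ q) (x : TV θ) : Prop :=
  S.Δ x = x ⊗ₜ[ℂ] (1 : TV θ) + (1 : TV θ) ⊗ₜ[ℂ] x

/-- The submodule `I ⊗ T(V) + T(V) ⊗ J` of `T(V) ⊗ T(V)`. -/
def mixedPair (I J : Submodule ℂ (TV θ)) : Submodule ℂ (TensorProduct ℂ (TV θ) (TV θ)) :=
  Submodule.span ℂ
    ({x | ∃ a b : TV θ, a ∈ I ∧ x = a ⊗ₜ[ℂ] b} ∪ {x | ∃ a b : TV θ, b ∈ J ∧ x = a ⊗ₜ[ℂ] b})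

/-- The submodule `I ⊗ T(V) + T(V) ⊗ I` of `T(V) ⊗ T(V)`. -/
def mixedSub (I : Submodule ℂ (TV θ)) : Submodule ℂ (TensorProduct ℂ (TV θ) (TV θ)) :=
  mixedPair I I

/-- `I` is the defining ideal of a pre-Nichols algebra of `q`：an ℕ₀-homogeneous
two-sided (bi-)ideal of `T(V)` generated in degrees `≥ 2` which is also a coideal.
Such an ideal is automatically contained in the defining ideal `Jq` of the Nichols
algebra, and the pre-Nichols algebra is the quotient `T(V)/I`. -/
structure IsPreNicholsIdeal (S : BraidedStr θ q) (I : Submodule ℂ (TV θ)) : Prop where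
  mul_left : ∀ a x : TV θ, x ∈ I → a * x ∈ I
  mul_right : ∀ a x : TV θ, x ∈ I → x * a ∈ I
  homog_ge2 : I = Submodule.span ℂ {x | x ∈ I ∧ ∃ n, 2 ≤ n ∧ x ∈ homogTot θ n}
  coideal : ∀ x ∈ I, S.Δ x ∈ mixedSub I

/-- The defining ideal `J_q` of the Nichols algebra `B_q = T(V)/J_q`:
the maximal homogeneous braided Hopf ideal generated in degrees `≥ 2`. -/
def Jq (S : BraidedStr θ q) : Submodule ℂ (TV θ) := sSup {I | IsPreNicholsIdeal S I}

/-- The standard filtration of `T(V)`: span of words of length `≤ n`. -/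
def Wfil (θ : ℕ) (n : ℕ) : Submodule ℂ (TV θ) :=
  Submodule.span ℂ {x | ∃ w : List (Fin θ), w.length ≤ n ∧ x = wordElem θ w}

/-- The quotient algebra `T(V)/I` has finite Gelfand–Kirillov dimension, i.e.
the standard filtration of the (finitely generated) quotient has polynomial growth. -/
def FinGK (I : Submodule ℂ (TV θ)) : Prop :=
  ∃ C d : ℕ, ∀ n : ℕ, Module.finrank ℂ ((Wfil θ n).map I.mkQ) ≤ C * (n + 1) ^ d

/-- The Gelfand–Kirillov dimension of the quotient algebra `T(V)/I`. -/
def GKdim (I : Submodule ℂ (TV θ)) : ℝ :=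
  Filter.limsup
    (fun n : ℕ => Real.log (Module.finrank ℂ ((Wfil θ n).map I.mkQ)) / Real.log n)
    Filter.atTop

/-- `I` defines an eminent pre-Nichols algebra: it is a finite-GKdim pre-Nichols
algebra, and every finite-GKdim pre-Nichols algebra of `q` is a quotient of it. -/
def IsEminent (S : BraidedStr θ q) (I : Submodule ℂ (TV θ)) : Prop :=
  IsPreNicholsIdeal S I ∧ FinGK I ∧
    ∀ I' : Submodule ℂ (TV θ), IsPreNicholsIdeal S I' → FinGK I' → I ≤ I'

/-- The Dynkin diagram of the braiding matrix `q`: vertices `Fin θ`, an edge between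
`i ≠ j` iff `q̃_{ij} ≠ 1`. -/
def dynkin {θ : ℕ} (q : Fin θ → Fin θ → ℂˣ) : SimpleGraph (Fin θ) :=
  SimpleGraph.fromRel (fun i j => qtil q i j ≠ 1)

/-- The quantum number `(m)_t = 1 + t + ⋯ + t^{m-1}`. -/
def qnum (t : ℂ) (m : ℕ) : ℂ := ∑ k ∈ Finset.range m, t ^ k

/-- The set of `n ∈ ℕ₀` such that `(n+1)_{q_{ii}} (1 - q_{ii}^n q̃_{ij}) = 0`,
i.e. such that `(ad_c x_i)^{n+1} x_j = 0` in the Nichols algebra.  The entry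
`c_{ij}` of the generalized Cartan matrix is `-(min of this set)`. -/
def cSet {θ : ℕ} (q : Fin θ → Fin θ → ℂˣ) (i j : Fin θ) : Set ℕ :=
  {n | qnum (q i i : ℂ) (n + 1) * (1 - (q i i : ℂ) ^ n * qtil q i j) = 0}

/-- The generalized Cartan matrix of `q`. -/
def cij {θ : ℕ} (q : Fin θ → Fin θ → ℂˣ) (i j : Fin θ) : ℤ :=
  if i = j then 2 else -(Int.ofNat (sInf (cSet q i j)))

/-- All entries `c_{ij}` are defined at the vertex `i`. -/
def reflectable {θ : ℕ} (q : Fin θ → Fin θ → ℂˣ) (i : Fin θ) : Prop :=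
  ∀ j, j ≠ i → (cSet q i j).Nonempty

/-- The `i`-th reflection of the braiding matrix:
`(r_i q)_{jk} = q(s_i α_j, s_i α_k)` where `s_i α_j = α_j - c_{ij} α_i`. -/
def reflectMat {θ : ℕ} (q : Fin θ → Fin θ → ℂˣ) (i : Fin θ) : Fin θ → Fin θ → ℂˣ :=
  fun j k =>
    q j k * q j i ^ (-(cij q i k)) * q i k ^ (-(cij q i j)) * q i i ^ (cij q i j * cij q i k)

/-- The reflection `s_i` acting on `ℤ^θ`. -/
def sRefl {θ : ℕ} (q : Fin θ → Fin θ → ℂˣ) (i : Fin θ) (β : Fin θ → ℤ) : Fin θ → ℤ :=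
  fun k => β k - (if k = i then ∑ j, cij q i j * β j else 0)

/-- The (real) roots of `q`, together with the base points of the Weyl groupoid at
which they live: pairs `(q', β)` obtained from a simple root of `q` by iterated
reflections. -/
inductive ReachRoot {θ : ℕ} (q₀ : Fin θ → Fin θ → ℂˣ) :
    (Fin θ → Fin θ → ℂˣ) → (Fin θ → ℤ) → Prop
  | simple (j : Fin θ) : ReachRoot q₀ q₀ (fun k => if k = j then 1 else 0)
  | reflect {q' : Fin θ → Fin θ → ℂˣ} {β : Fin θ → ℤ} (i : Fin θ) :
      ReachRoot q₀ q' β → ReachRoot q₀ (reflectMat q' i) (sRefl q' i β)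

/-- `q` has a finite (generalized) root system: all reflections are defined at every
point of the Weyl groupoid, and the set of roots so obtained is finite. -/
def FiniteRootSystem {θ : ℕ} (q : Fin θ → Fin θ → ℂˣ) : Prop :=
  (∀ q' i, (∃ β, ReachRoot q q' β) → reflectable q' i) ∧
    Set.Finite {β : Fin θ → ℤ | ∃ q', ReachRoot q q' β}

/-- Conjecture (Andruskiewitsch–Angiono–Heckenberger): the root system of a Nichols
algebra of diagonal type with finite Gelfand–Kirillov dimension is finite. -/
def AAH : Prop :=
  ∀ (θ : ℕ) (q : Fin θ → Fin θ → ℂˣ) (S : BraidedStr θ q), FinGK (Jq S) → FiniteRootSystem q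

/-- The two-sided ideal of `T(V)` generated by a set. -/
def idealGen (θ : ℕ) (s : Set (TV θ)) : Submodule ℂ (TV θ) :=
  Submodule.span ℂ {x | ∃ g ∈ s, ∃ a b : TV θ, x = a * g * b}

end PreNicholsPaper

namespace PreNicholsPaper

/-!
Let `J` be the joint kernel of all the functionals `ε ∘ ∂_{b_n} ∘ ⋯ ∘ ∂_{b_1}`, where the `∂_b` are
the skew derivations of `T(V)`; it is the defining ideal of the Nichols algebra.

The relation has degree `5α_i + 3α_j + α_k`, and it lies in `J` because all its skew derivatives
do, by the braided Leibniz rule. It remains to see that an element `w ∈ J` of degree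
`γ ≤ 5α_i + 3α_j + α_k` lies in `I`. By induction on `γ` the coproduct of `w` is
`w ⊗ 1 + 1 ⊗ w` modulo `I`. If `w ∉ I`, then for each vertex `s` the elements `x_s` and `w` span a
braided subspace of `T(V)/I` of rank two and diagonal type, whose braiding matrix is read off from
`q_{ss}`, `q(γ, γ)` and `q(α_s, γ) q(γ, α_s)`. The subalgebra it generates has finite GK-dimension,
hence so does its Nichols algebra, and by the AAH conjecture its root system is finite. But for a
suitable `s` the alternating reflections never stop producing new roots, because the product of
consecutive Cartan integers is always at least four, or else they reach an undefined reflection.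
All the labels are powers of a primitive ninth root of unity, so this is a finite verification.

As `I` is homogeneous for the total degree only, `w` and `x_s ^ n` need not be independent
modulo `I` when `w` has total degree `n`. They are separated by the actions of a second vertex `t`
with `q(γ, α_t) q(α_t, γ) ≠ (q_{st} q_{ts}) ^ n`, under which `I` is stable.
-/

theorem qnum_eq_zero_iff (t : ℂ) (n : ℕ) : qnum t (n + 1) = 0 ↔ t ≠ 1 ∧ t ^ (n + 1) = 1 := by
  unfold qnum
  obtain rfl | h := eq_or_ne t 1
  · simp [Nat.cast_add_one_ne_zero]
  · rw [geom_sum_eq h, div_eq_zero_iff, sub_eq_zero, sub_eq_zero]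
    simp [h]

/-! ### Infinite root systems of rank two -/

section RankTwo

variable {θ N : ℕ} {z : ℂˣ} {q : Fin θ → Fin θ → ℂˣ} {u v : Fin θ}

/-- Exponents, with respect to a root of unity `z`, of a rank-two diagram with vertices `u, v`:
`q_{uu} = z ^ fst`, `q̃_{uv} = z ^ link` and `q_{vv} = z ^ snd`. -/
structure DiagramExp where
  fst : ℤ
  link : ℤ
  snd : ℤ
  deriving DecidableEq

/-- The diagram of `q` at the vertices `u, v` has exponents `x` with respect to `z`. -/
structure HasExp (z : ℂˣ) (q : Fin θ → Fin θ → ℂˣ) (u v : Fin θ) (x : DiagramExp) : Prop where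
  fst : q u u = z ^ x.fst
  link : q u v * q v u = z ^ x.link
  snd : q v v = z ^ x.snd

namespace DiagramExp

/-- The diagram with its two vertices exchanged. -/
def swap (x : DiagramExp) : DiagramExp := ⟨x.snd, x.link, x.fst⟩

/-- The diagram after the reflection at the first vertex, when the Cartan entry there is `-c` and
`z` has order `N`; exponents are reduced modulo `N`. -/
def reflect (N c : ℕ) (x : DiagramExp) : DiagramExp :=
  ⟨x.fst, (-x.link - 2 * c * x.fst) % N, (x.snd + c * x.link + c ^ 2 * x.fst) % N⟩

/-- The membership condition of `cSet` read on the exponents of a diagram. -/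
def CartanCond (N : ℕ) (x : DiagramExp) (n : ℕ) : Prop :=
  (N : ℤ) ∣ n * x.fst + x.link ∨ ¬ (N : ℤ) ∣ x.fst ∧ (N : ℤ) ∣ (n + 1 : ℕ) * x.fst

instance (x : DiagramExp) : DecidablePred (CartanCond N x) := fun _ =>
  inferInstanceAs (Decidable (_ ∨ _))

/-- Minus the Cartan entry at the first vertex, or `none` if the reflection there is undefined. -/
def cartan (N : ℕ) (x : DiagramExp) : Option ℕ :=
  (List.range N).find? fun n => decide (CartanCond N x n)

/-- Reflecting alternately at the two vertices, one meets an undefined reflection or returns to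
`s₀`, and the Cartan entries met on the way are at most `-A` at one vertex and at most `-B` at the
other. A state is `(A, B, x)`, the next reflection being at the first vertex of `x`; the last two
arguments are the remaining number of steps and the current state. -/
def infiniteCheck (N : ℕ) (s₀ : ℕ × ℕ × DiagramExp) : ℕ → ℕ × ℕ × DiagramExp → Bool
  | 0, _ => false
  | n + 1, (A, B, x) =>
    match x.cartan N with
    | none => true
    | some c => decide (A ≤ c) && (decide ((B, A, (x.reflect N c).swap) = s₀) ||
        infiniteCheck N s₀ n (B, A, (x.reflect N c).swap))

theorem cartanCond_mod {x : DiagramExp} {n : ℕ} (h : CartanCond N x n) :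
    CartanCond N x (n % N) := by
  have hmod : ((n % N : ℕ) : ℤ) ≡ n [ZMOD N] := by
    rw [Int.natCast_mod]
    exact Int.mod_modEq _ _
  simp only [CartanCond, ← Int.modEq_zero_iff_dvd, Nat.cast_succ] at h ⊢
  exact h.imp ((hmod.mul_right _).add_right _).trans
    (And.imp_right ((hmod.add_right 1).mul_right _).trans)

end DiagramExp

theorem HasExp.swap {x : DiagramExp} (h : HasExp z q u v x) : HasExp z q v u x.swap :=
  ⟨h.snd, (mul_comm _ _).trans h.link, h.fst⟩

theorem HasExp.mem_cSet_iff {x : DiagramExp} (h : HasExp z q u v x) (hz : IsPrimitiveRoot z N)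
    (n : ℕ) : n ∈ cSet q u v ↔ x.CartanCond N n := by
  have hlink : qtil q u v = ((z ^ x.link : ℂˣ) : ℂ) := by rw [← h.link, qtil, Units.val_mul]
  rw [cSet, Set.mem_ofPred_eq, mul_eq_zero, qnum_eq_zero_iff, h.fst, hlink, sub_eq_zero, or_comm,
    eq_comm (a := (1 : ℂ))]
  norm_cast
  simp only [Units.val_eq_one]
  rw [← zpow_natCast, ← zpow_natCast, ← zpow_mul', ← zpow_mul', ← zpow_add,
    hz.zpow_eq_one_iff_dvd, hz.zpow_eq_one_iff_dvd, hz.zpow_eq_one_iff_dvd,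
    DiagramExp.CartanCond]

theorem HasExp.cSet_eq_empty [NeZero N] {x : DiagramExp} (h : HasExp z q u v x)
    (hz : IsPrimitiveRoot z N) (hx : x.cartan N = none) : cSet q u v = ∅ := by
  refine Set.eq_empty_of_forall_notMem fun n hn => ?_
  have hmod := DiagramExp.cartanCond_mod ((h.mem_cSet_iff hz n).1 hn)
  simpa [hmod] using
    List.find?_eq_none.1 hx (n % N) (List.mem_range.2 (Nat.mod_lt _ (NeZero.pos N)))

theorem HasExp.cij_eq {x : DiagramExp} (h : HasExp z q u v x) (hz : IsPrimitiveRoot z N)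
    (huv : u ≠ v) {c : ℕ} (hx : x.cartan N = some c) : cij q u v = -(c : ℤ) := by
  rw [DiagramExp.cartan, List.find?_range_eq_some] at hx
  simp only [decide_eq_true_eq, Bool.not_eq_true', decide_eq_false_iff_not] at hx
  have hc : c ∈ cSet q u v := (h.mem_cSet_iff hz c).2 hx.1
  have hmin : sInf (cSet q u v) = c :=
    (Nat.sInf_le hc).antisymm (le_csInf ⟨c, hc⟩ fun n hn =>
      not_lt.1 fun hlt => hx.2.2 n hlt ((h.mem_cSet_iff hz n).1 hn))
  rw [cij, if_neg huv, hmin]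
  rfl

theorem HasExp.reflect {x : DiagramExp} (h : HasExp z q u v x) (hz : IsPrimitiveRoot z N)
    {c : ℕ} (hc : cij q u v = -(c : ℤ)) :
    HasExp z (reflectMat q u) u v (x.reflect N c) := by
  have huu : cij q u u = 2 := if_pos rfl
  have hmod : ∀ e : ℤ, z ^ (e % N) = z ^ e := fun e => by rw [hz.eq_orderOf, zpow_mod_orderOf]
  obtain ⟨hfst, hlink, hsnd⟩ := h
  refine ⟨?_, ?_, ?_⟩
  · simp only [reflectMat, huu, DiagramExp.reflect]
    rw [← hfst]
    group
  · have : reflectMat q u u v * reflectMat q u v u =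
        (q u v * q v u)⁻¹ * q u u ^ (-(2 * c : ℤ)) := by
      have hsq : ∀ g : ℂˣ, g ^ (2 : ℤ) = g * g := fun g => zpow_two g
      simp only [reflectMat, huu, hc, neg_neg, mul_neg, neg_mul, zpow_neg, zpow_mul, hsq,
        mul_comm (c : ℤ) 2, mul_zpow]
      simp only [Units.ext_iff, Units.val_mul, Units.val_inv_eq_inv_val]
      field_simp
    rw [this, DiagramExp.reflect, hmod, hlink, hfst, ← zpow_neg, ← zpow_mul', ← zpow_add]
    congr 1
    ring
  · have : reflectMat q u v v = q v v * (q u v * q v u) ^ (c : ℤ) * q u u ^ (c ^ 2 : ℤ) := by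
      simp only [reflectMat, hc, neg_neg, neg_mul_neg]
      rw [mul_zpow, mul_comm (q u v ^ (c : ℤ)), mul_assoc (q v v), sq]
    rw [this, DiagramExp.reflect, hmod, hsnd, hlink, hfst, ← zpow_mul', ← zpow_mul', ← zpow_add,
      ← zpow_add]

theorem sRefl_self {q : Fin 2 → Fin 2 → ℂˣ} {u v : Fin 2} (huv : u ≠ v) (β : Fin 2 → ℤ) :
    sRefl q u β u = -cij q u v * β v - β u := by
  have huniv : (Finset.univ : Finset (Fin 2)) = {u, v} := by
    revert u v; decide
  rw [sRefl, if_pos rfl, huniv, Finset.sum_pair huv, cij, if_pos rfl]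
  ring

theorem sRefl_other {β : Fin θ → ℤ} (huv : u ≠ v) : sRefl q u β v = β v := by
  simp [sRefl, huv.symm]

-- `a, b` are the coordinates of a root; `b` is about to be reflected with Cartan entry `-c`.
theorem root_growth {a b A B c : ℤ} (hA : 0 < A) (hAB : 4 ≤ A * B) (hAc : A ≤ c) (hb : 0 ≤ b)
    (hab : 2 * b + 1 ≤ A * a) : b + 1 ≤ c * a - b ∧ 2 * a + 1 ≤ B * (c * a - b) := by
  have ha : 0 < a := pos_of_mul_pos_right (by omega) hA.le
  have hB : 0 < B := pos_of_mul_pos_right (by omega) hA.le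
  have hca : A * a ≤ c * a := mul_le_mul_of_nonneg_right hAc ha.le
  refine ⟨by omega, ?_⟩
  have h1 : B * (A * a + 1) ≤ B * (2 * (c * a - b)) := mul_le_mul_of_nonneg_left (by omega) hB.le
  have h2 : 4 * a ≤ A * B * a := mul_le_mul_of_nonneg_right hAB ha.le
  nlinarith

theorem not_finiteRootSystem_of_invariant
    {C : (Fin 2 → Fin 2 → ℂˣ) → Fin 2 → Fin 2 → ℕ → ℕ → Prop}
    (hbound : ∀ {q u v A B}, C q u v A B → u ≠ v ∧ 4 ≤ A * B)
    (hstep : ∀ {q u v A B}, C q u v A B → reflectable q u →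
      (A : ℤ) ≤ -cij q u v ∧ C (reflectMat q u) v u B A)
    {q : Fin 2 → Fin 2 → ℂˣ} {u v : Fin 2} {A B : ℕ} (hq : C q u v A B) :
    ¬ FiniteRootSystem q := by
  rintro ⟨hrefl, hfin⟩
  have hunbounded : ∀ m : ℕ, ∃ q' u v A B β, C q' u v A B ∧ ReachRoot q q' β ∧
      0 ≤ β u ∧ 2 * β u + 1 ≤ A * β v ∧ m ≤ β u + β v := by
    intro m
    induction m with
    | zero =>
      obtain ⟨huv, hAB⟩ := hbound hq
      have hA : 0 < A := Nat.pos_of_mul_pos_right (by omega : 0 < A * B)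
      exact ⟨q, u, v, A, B, _, hq, .simple v, by simp [huv]; omega⟩
    | succ m ih =>
      obtain ⟨q', u, v, A, B, β, hC, hβ, hu, huv', hm⟩ := ih
      obtain ⟨huv, hAB⟩ := hbound hC
      obtain ⟨hAc, hC'⟩ := hstep hC (hrefl q' u ⟨β, hβ⟩)
      have hA : 0 < A := Nat.pos_of_mul_pos_right (by omega : 0 < A * B)
      obtain ⟨hgrow, hnext⟩ := root_growth (by exact_mod_cast hA) (B := B) (by exact_mod_cast hAB)
        hAc hu huv'
      have hv : 0 ≤ β v := (pos_of_mul_pos_right (by omega) (Int.natCast_nonneg A)).le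
      refine ⟨_, v, u, B, A, _, hC', hβ.reflect u, ?_⟩
      rw [sRefl_self huv, sRefl_other huv]
      exact ⟨hv, hnext, by push_cast; omega⟩
  obtain ⟨M, hM⟩ := (hfin.image fun β => β 0 + β 1).bddAbove
  obtain ⟨q', u, v, A, B, β, hC, hβ, -, -, hm⟩ := hunbounded (M.toNat + 1)
  have hle : β 0 + β 1 ≤ M := hM ⟨β, ⟨q', hβ⟩, rfl⟩
  have hsum : β u + β v = β 0 + β 1 := by
    have := (hbound hC).1
    revert this
    fin_cases u <;> fin_cases v <;> simp [add_comm]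
  omega

theorem not_finiteRootSystem_of_infiniteCheck [NeZero N] {q : Fin 2 → Fin 2 → ℂˣ} {u v : Fin 2}
    (hz : IsPrimitiveRoot z N) (huv : u ≠ v) {x : DiagramExp} (hq : HasExp z q u v x) {A B n : ℕ}
    (hAB : 4 ≤ A * B) (hcheck : DiagramExp.infiniteCheck N (A, B, x) n (A, B, x) = true) :
    ¬ FiniteRootSystem q := by
  refine not_finiteRootSystem_of_invariant (C := fun q' u v A' B' => u ≠ v ∧ 4 ≤ A' * B' ∧
      ∃ n' x', HasExp z q' u v x' ∧
        DiagramExp.infiniteCheck N (A, B, x) n' (A', B', x') = true)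
    (fun h => ⟨h.1, h.2.1⟩) ?_ ⟨huv, hAB, n, x, hq, hcheck⟩
  rintro q' u v A' B' ⟨huv, hAB', n', x', hx', hcheck'⟩ hrefl
  obtain _ | n' := n'
  · simp [DiagramExp.infiniteCheck] at hcheck'
  rw [DiagramExp.infiniteCheck] at hcheck'
  cases hcart : x'.cartan N with
  | none =>
    exact absurd (hrefl v huv.symm) (Set.not_nonempty_iff_eq_empty.2 (hx'.cSet_eq_empty hz hcart))
  | some c =>
    simp only [hcart, Bool.and_eq_true, Bool.or_eq_true, decide_eq_true_eq] at hcheck'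
    have hc := hx'.cij_eq hz huv hcart
    refine ⟨by rw [hc]; simpa using hcheck'.1, huv.symm, by rwa [mul_comm], ?_⟩
    obtain hreturn | hcheck' := hcheck'.2
    · exact ⟨n, _, (hx'.reflect hz hc).swap, by rw [hreturn]; exact hcheck⟩
    · exact ⟨n', _, (hx'.reflect hz hc).swap, hcheck'⟩

end RankTwo

/-! ### The monomial basis -/

section Words

variable {θ : ℕ}

theorem degW_nil : degW θ [] = 0 := by
  ext; simp [degW]

theorem degW_cons (a : Fin θ) (w : List (Fin θ)) : degW θ (a :: w) = δ θ a + degW θ w := by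
  ext i
  simp only [degW, δ, Pi.add_apply, List.count_cons, beq_iff_eq, eq_comm (a := a)]
  omega

theorem degW_append (v w : List (Fin θ)) : degW θ (v ++ w) = degW θ v + degW θ w := by
  ext i; simp [degW]

theorem length_eq_sum_degW (w : List (Fin θ)) : w.length = ∑ i, degW θ w i := by
  induction w with
  | nil => simp [degW]
  | cons a w ih =>
    rw [degW_cons, List.length_cons, ih]
    simp [Finset.sum_add_distrib, δ, add_comm]

theorem wordElem_nil : wordElem θ [] = 1 := by simp [wordElem]

theorem wordElem_cons (a : Fin θ) (w : List (Fin θ)) :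
    wordElem θ (a :: w) = gen θ a * wordElem θ w := by simp [wordElem]

theorem wordElem_append (v w : List (Fin θ)) :
    wordElem θ (v ++ w) = wordElem θ v * wordElem θ w := by simp [wordElem]

theorem wordElem_singleton (a : Fin θ) : wordElem θ [a] = gen θ a := by simp [wordElem]

/-- The basis of `T(V)` given by the monomials. -/
def wordBasis (θ : ℕ) : Module.Basis (List (Fin θ)) ℂ (TV θ) :=
  (FreeAlgebra.basisFreeMonoid ℂ (Fin θ)).reindex FreeMonoid.toList

theorem wordBasis_apply (w : List (Fin θ)) : wordBasis θ w = wordElem θ w := by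
  rw [wordBasis, Module.Basis.reindex_apply]
  change MonoidAlgebra.lift ℂ (FreeAlgebra ℂ (Fin θ)) (FreeMonoid (Fin θ))
    (FreeMonoid.lift (FreeAlgebra.ι ℂ)) (MonoidAlgebra.single (FreeMonoid.ofList w) 1) = _
  rw [MonoidAlgebra.lift_single, one_smul, FreeMonoid.lift_apply]
  rfl

section Ext

variable {M : Type*} [AddCommMonoid M] [Module ℂ M]

theorem word_ext {F G : TV θ →ₗ[ℂ] M} (h : ∀ w, F (wordElem θ w) = G (wordElem θ w)) : F = G :=
  (wordBasis θ).ext fun w => by rw [wordBasis_apply, h]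

theorem word_tmul_ext {F G : TV θ ⊗[ℂ] TV θ →ₗ[ℂ] M}
    (h : ∀ v w, F (wordElem θ v ⊗ₜ wordElem θ w) = G (wordElem θ v ⊗ₜ wordElem θ w)) : F = G :=
  TensorProduct.ext (word_ext fun v => word_ext fun w => h v w)

theorem gen_mul_ext {F G : TV θ →ₗ[ℂ] M} (h1 : F 1 = G 1)
    (h : ∀ a y, F y = G y → F (gen θ a * y) = G (gen θ a * y)) : F = G := by
  refine word_ext fun w => ?_
  induction w with
  | nil => rw [wordElem_nil, h1]
  | cons a w ih => rw [wordElem_cons, h _ _ ih]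

end Ext

/-- The span of the monomials whose word satisfies `P`; the submodules `homogTot`, `homogD` and
`Wfil` are of this form. -/
def wordSpan (P : List (Fin θ) → Prop) : Submodule ℂ (TV θ) :=
  Submodule.span ℂ {x | ∃ w, P w ∧ x = wordElem θ w}

section WordSpan

variable {P Q R : List (Fin θ) → Prop} {x y : TV θ}

theorem wordElem_mem_wordSpan {w : List (Fin θ)} (hw : P w) : wordElem θ w ∈ wordSpan P :=
  Submodule.subset_span ⟨w, hw, rfl⟩

theorem map_eq_of_mem_wordSpan {M : Type*} [AddCommMonoid M] [Module ℂ M] {F G : TV θ →ₗ[ℂ] M}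
    (h : ∀ w, P w → F (wordElem θ w) = G (wordElem θ w)) (hx : x ∈ wordSpan P) : F x = G x :=
  LinearMap.eqOn_span (by rintro _ ⟨w, hw, rfl⟩; exact h w hw) hx

theorem map_mem_of_forall_word {M : Type*} [AddCommMonoid M] [Module ℂ M] {F : TV θ →ₗ[ℂ] M}
    {N : Submodule ℂ M} (h : ∀ w, F (wordElem θ w) ∈ N) (x : TV θ) : F x ∈ N := by
  rw [← (wordBasis θ).linearCombination_repr x, Finsupp.linearCombination_apply, map_finsuppSum]
  exact Submodule.sum_mem _ fun w _ => by
    simpa only [map_smul, wordBasis_apply] using N.smul_mem _ (h w)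

theorem mul_mem_wordSpan (h : ∀ v w, P v → Q w → R (v ++ w)) (hx : x ∈ wordSpan P)
    (hy : y ∈ wordSpan Q) : x * y ∈ wordSpan R := by
  have := Submodule.mul_mem_mul hx hy
  rw [wordSpan, wordSpan, Submodule.span_mul_span] at this
  refine Submodule.span_mono ?_ this
  rintro _ ⟨_, ⟨v, hv, rfl⟩, _, ⟨w, hw, rfl⟩, rfl⟩
  exact ⟨v ++ w, h v w hv hw, (wordElem_append _ _).symm⟩

theorem exists_mem_Wfil (x : TV θ) : ∃ n, x ∈ Wfil θ n := by
  refine ⟨((wordBasis θ).repr x).support.sup List.length, ?_⟩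
  nth_rw 2 [← (wordBasis θ).linearCombination_repr x]
  rw [Finsupp.linearCombination_apply]
  refine Submodule.sum_mem _ fun w hw => Submodule.smul_mem _ _ ?_
  rw [wordBasis_apply]
  exact wordElem_mem_wordSpan (Finset.le_sup (f := List.length) hw)

theorem word_mem_homogD (w : List (Fin θ)) : wordElem θ w ∈ homogD θ (degW θ w) :=
  wordElem_mem_wordSpan rfl

theorem one_mem_homogD : (1 : TV θ) ∈ homogD θ 0 :=
  wordElem_mem_wordSpan (w := []) degW_nil

theorem gen_mem_homogD (a : Fin θ) : gen θ a ∈ homogD θ (δ θ a) := by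
  have := word_mem_homogD [a]
  rwa [wordElem_singleton, degW_cons, degW_nil, add_zero] at this

theorem mul_mem_homogD {d e : Fin θ → ℕ} (hx : x ∈ homogD θ d) (hy : y ∈ homogD θ e) :
    x * y ∈ homogD θ (d + e) :=
  mul_mem_wordSpan (fun v w hv hw => by rw [degW_append, hv, hw]) hx hy

theorem brk_mem_homogD (q : Fin θ → Fin θ → ℂˣ) {d e : Fin θ → ℕ} (hx : x ∈ homogD θ d)
    (hy : y ∈ homogD θ e) (a b : Fin θ → ℕ) : brk q a b x y ∈ homogD θ (d + e) :=
  Submodule.sub_mem _ (mul_mem_homogD hx hy)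
    (Submodule.smul_mem _ _ (add_comm d e ▸ mul_mem_homogD hy hx))

end WordSpan

section Coeff

/-- The coefficient of the monomial `w`. -/
def coeff (w : List (Fin θ)) : TV θ →ₗ[ℂ] ℂ := (wordBasis θ).coord w

theorem coeff_word (v w : List (Fin θ)) :
    coeff v (wordElem θ w) = if w = v then 1 else 0 := by
  rw [← wordBasis_apply, coeff, Module.Basis.coord_apply, Module.Basis.repr_self,
    Finsupp.single_apply]

theorem coeff_nil_one : coeff (θ := θ) [] 1 = 1 := by
  rw [← wordElem_nil, coeff_word, if_pos rfl]

theorem coeff_singleton_one (b : Fin θ) : coeff [b] 1 = 0 := by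
  rw [← wordElem_nil, coeff_word, if_neg (List.cons_ne_nil _ _).symm]

theorem coeff_nil_gen (a : Fin θ) : coeff [] (gen θ a) = 0 := by
  rw [← wordElem_singleton, coeff_word, if_neg (List.cons_ne_nil _ _)]

theorem coeff_singleton_gen (a b : Fin θ) : coeff [b] (gen θ a) = if a = b then 1 else 0 := by
  simp only [← wordElem_singleton, coeff_word, List.cons.injEq, and_true]

theorem coeff_nil_mul (x y : TV θ) : coeff [] (x * y) = coeff [] x * coeff [] y := by
  have : (LinearMap.mul ℂ (TV θ)).compr₂ (coeff []) =
      (LinearMap.mul ℂ ℂ).compl₁₂ (coeff []) (coeff []) :=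
    word_ext fun v => word_ext fun w => by
      simp [← wordElem_append, coeff_word, ite_and, and_comm (a := v = [])]
  exact LinearMap.congr_fun₂ this x y

theorem coeff_singleton_mul (b : Fin θ) (x y : TV θ) :
    coeff [b] (x * y) = coeff [] x * coeff [b] y + coeff [b] x * coeff [] y := by
  have : (LinearMap.mul ℂ (TV θ)).compr₂ (coeff [b]) =
      (LinearMap.mul ℂ ℂ).compl₁₂ (coeff []) (coeff [b]) +
        (LinearMap.mul ℂ ℂ).compl₁₂ (coeff [b]) (coeff []) :=
    word_ext fun v => word_ext fun w => by
      rcases v with _ | ⟨a, v⟩ <;> rcases w with _ | ⟨c, w⟩ <;>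
        simp [← wordElem_append, coeff_word]
  exact LinearMap.congr_fun₂ this x y

theorem coeff_eq_zero_of_mem_wordSpan {P : List (Fin θ) → Prop} {v : List (Fin θ)} (hv : ¬ P v)
    {x : TV θ} (hx : x ∈ wordSpan P) : coeff v x = 0 :=
  map_eq_of_mem_wordSpan (G := 0) (fun w hw => by
    rw [coeff_word, if_neg (by rintro rfl; exact hv hw), LinearMap.zero_apply]) hx

end Coeff

section Diag

/-- The linear endomorphism of `T(V)` which is diagonal on the monomials. -/
def diag (f : List (Fin θ) → ℂ) : TV θ →ₗ[ℂ] TV θ :=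
  (wordBasis θ).constr ℂ fun w => f w • wordElem θ w

theorem diag_word (f : List (Fin θ) → ℂ) (w : List (Fin θ)) :
    diag f (wordElem θ w) = f w • wordElem θ w := by
  rw [← wordBasis_apply, diag, Module.Basis.constr_basis, wordBasis_apply]

variable (P : List (Fin θ) → Prop) [DecidablePred P] {x : TV θ}

/-- The projection onto `wordSpan P` killing the monomials whose word does not satisfy `P`. -/
def wordProj : TV θ →ₗ[ℂ] TV θ := diag fun w => if P w then 1 else 0

theorem wordProj_word (w : List (Fin θ)) :
    wordProj P (wordElem θ w) = if P w then wordElem θ w else 0 := by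
  rw [wordProj, diag_word, ite_smul, one_smul, zero_smul]

theorem wordProj_mem (x : TV θ) : wordProj P x ∈ wordSpan P :=
  map_mem_of_forall_word (fun w => by
    rw [wordProj_word]
    split_ifs with h
    exacts [wordElem_mem_wordSpan h, Submodule.zero_mem _]) x

theorem wordProj_of_mem (hx : x ∈ wordSpan P) : wordProj P x = x :=
  map_eq_of_mem_wordSpan (G := LinearMap.id) (fun w hw => by
    rw [wordProj_word, if_pos hw, LinearMap.id_apply]) hx

theorem wordProj_eq_zero {Q : List (Fin θ) → Prop} (h : ∀ w, Q w → ¬ P w) (hx : x ∈ wordSpan Q) :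
    wordProj P x = 0 :=
  map_eq_of_mem_wordSpan (G := 0) (fun w hw => by
    rw [wordProj_word, if_neg (h w hw), LinearMap.zero_apply]) hx

theorem wordProj_eq_sum_coeff {s : Finset (List (Fin θ))} (hs : ∀ w, P w ↔ w ∈ s) (x : TV θ) :
    wordProj P x = ∑ w ∈ s, coeff w x • wordElem θ w := by
  have : wordProj P = ∑ w ∈ s, (coeff w).smulRight (wordElem θ w) := word_ext fun v => by
    simp [wordProj_word, hs, coeff_word, LinearMap.sum_apply]
  rw [this, LinearMap.sum_apply]
  rfl

/-- The projection onto the component of total degree `n`. -/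
abbrev lenProj (θ n : ℕ) : TV θ →ₗ[ℂ] TV θ := wordProj fun w => w.length = n

/-- The projection onto the component of multidegree `d`. -/
abbrev degProj (d : Fin θ → ℕ) : TV θ →ₗ[ℂ] TV θ := wordProj fun w => degW θ w = d

theorem lenProj_zero (x : TV θ) : lenProj θ 0 x = coeff [] x • (1 : TV θ) :=
  (wordProj_eq_sum_coeff (fun w : List (Fin θ) => w.length = 0) (s := {[]}) (by simp)
    x).trans (by simp [wordElem_nil])

theorem lenProj_one (x : TV θ) : lenProj θ 1 x = ∑ b, coeff [b] x • gen θ b :=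
  (wordProj_eq_sum_coeff (fun w : List (Fin θ) => w.length = 1)
    (s := Finset.univ.map ⟨fun b => [b], List.singleton_injective⟩)
    (by simp [List.length_eq_one_iff, eq_comm]) x).trans (by simp [wordElem_singleton])

theorem degProj_zero (x : TV θ) : degProj 0 x = coeff [] x • (1 : TV θ) := by
  refine (wordProj_eq_sum_coeff (fun w : List (Fin θ) => degW θ w = 0) (s := {[]}) (fun w => ?_)
    x).trans (by simp [wordElem_nil])
  rw [Finset.mem_singleton, ← List.length_eq_zero_iff, length_eq_sum_degW]
  simp [funext_iff]

theorem sum_lenProj_of_mem_Wfil {n : ℕ} (hx : x ∈ Wfil θ n) :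
    ∑ m ∈ Finset.range (n + 1), lenProj θ m x = x := by
  rw [← LinearMap.sum_apply]
  refine map_eq_of_mem_wordSpan (G := LinearMap.id) (fun w hw => ?_) hx
  simp [wordProj_word, LinearMap.sum_apply, Nat.lt_succ_of_le hw]

end Diag

end Words

/-! ### The bicharacter and the braided action of degrees -/

section Form

variable {θ : ℕ} (q : Fin θ → Fin θ → ℂˣ)

theorem qf_add_left (a b c : Fin θ → ℕ) : qf q (a + b) c = qf q a c * qf q b c := by
  simp only [qf, ← Finset.prod_mul_distrib, Pi.add_apply, add_mul, pow_add]

theorem qf_add_right (a b c : Fin θ → ℕ) : qf q a (b + c) = qf q a b * qf q a c := by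
  simp only [qf, ← Finset.prod_mul_distrib, Pi.add_apply, mul_add, pow_add]

theorem qf_zero_left (a : Fin θ → ℕ) : qf q 0 a = 1 := by simp [qf]

theorem qf_zero_right (a : Fin θ → ℕ) : qf q a 0 = 1 := by simp [qf]

theorem qf_δ (i j : Fin θ) : qf q (δ θ i) (δ θ j) = q i j := by
  rw [qf, Finset.prod_eq_single i, Finset.prod_eq_single j]
  · simp [δ]
  · intro b _ hb; simp [δ, hb]
  · simp
  · intro b _ hb
    exact Finset.prod_eq_one fun c _ => by simp [δ, hb]
  · simp

theorem qf_ne_zero (a b : Fin θ → ℕ) : qf q a b ≠ 0 :=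
  Finset.prod_ne_zero_iff.2 fun _ _ => Finset.prod_ne_zero_iff.2 fun _ _ =>
    pow_ne_zero _ (Units.ne_zero _)

theorem qf_nsmul_left (n : ℕ) (a b : Fin θ → ℕ) : qf q (n • a) b = qf q a b ^ n := by
  induction n with
  | zero => rw [zero_smul, qf_zero_left, pow_zero]
  | succ n ih => rw [succ_nsmul, qf_add_left, ih, pow_succ]

theorem qf_nsmul_right (n : ℕ) (a b : Fin θ → ℕ) : qf q a (n • b) = qf q a b ^ n := by
  induction n with
  | zero => rw [zero_smul, qf_zero_right, pow_zero]
  | succ n ih => rw [succ_nsmul, qf_add_right, ih, pow_succ]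

/-- The automorphism `y ↦ q(d, deg y) y` of `T(V)`. -/
def actL (d : Fin θ → ℕ) : TV θ →ₗ[ℂ] TV θ := diag fun w => qf q d (degW θ w)

/-- The automorphism `y ↦ q(deg y, d) y` of `T(V)`. -/
def actR (d : Fin θ → ℕ) : TV θ →ₗ[ℂ] TV θ := diag fun w => qf q (degW θ w) d

theorem actL_word (d : Fin θ → ℕ) (w : List (Fin θ)) :
    actL q d (wordElem θ w) = qf q d (degW θ w) • wordElem θ w := diag_word _ _

theorem actR_word (d : Fin θ → ℕ) (w : List (Fin θ)) :
    actR q d (wordElem θ w) = qf q (degW θ w) d • wordElem θ w := diag_word _ _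

theorem actL_homog {d e : Fin θ → ℕ} {x : TV θ} (hx : x ∈ homogD θ e) :
    actL q d x = qf q d e • x :=
  map_eq_of_mem_wordSpan (G := qf q d e • LinearMap.id)
    (fun w hw => by rw [actL_word, hw, LinearMap.smul_apply, LinearMap.id_apply]) hx

theorem actR_homog {d e : Fin θ → ℕ} {x : TV θ} (hx : x ∈ homogD θ e) :
    actR q d x = qf q e d • x :=
  map_eq_of_mem_wordSpan (G := qf q e d • LinearMap.id)
    (fun w hw => by rw [actR_word, hw, LinearMap.smul_apply, LinearMap.id_apply]) hx

theorem actL_one (d : Fin θ → ℕ) : actL q d 1 = 1 := by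
  rw [actL_homog q one_mem_homogD, qf_zero_right, one_smul]

theorem actR_one (d : Fin θ → ℕ) : actR q d 1 = 1 := by
  rw [actR_homog q one_mem_homogD, qf_zero_left, one_smul]

theorem actL_mul (d : Fin θ → ℕ) (x y : TV θ) :
    actL q d (x * y) = actL q d x * actL q d y := by
  have : (LinearMap.mul ℂ (TV θ)).compr₂ (actL q d) =
      (LinearMap.mul ℂ (TV θ)).compl₁₂ (actL q d) (actL q d) :=
    word_ext fun v => word_ext fun w => by
      simp [← wordElem_append, actL_word, degW_append, qf_add_right, smul_smul, mul_comm]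
  exact LinearMap.congr_fun₂ this x y

theorem actL_gen_mul (d : Fin θ → ℕ) (a : Fin θ) (y : TV θ) :
    actL q d (gen θ a * y) = qf q d (δ θ a) • (gen θ a * actL q d y) := by
  rw [actL_mul, actL_homog q (gen_mem_homogD a), smul_mul_assoc]

theorem actL_add (d e : Fin θ → ℕ) : actL q (d + e) = actL q d ∘ₗ actL q e :=
  word_ext fun w => by
    simp [actL_word, qf_add_left, smul_smul, mul_comm]

theorem actR_add (d e : Fin θ → ℕ) : actR q (d + e) = actR q d ∘ₗ actR q e :=
  word_ext fun w => by
    simp [actR_word, qf_add_right, smul_smul, mul_comm]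

theorem actL_zero : actL q 0 = LinearMap.id :=
  word_ext fun w => by simp [actL_word, qf_zero_left]

theorem actR_zero : actR q 0 = LinearMap.id :=
  word_ext fun w => by simp [actR_word, qf_zero_right]

theorem coeff_nil_actL (d : Fin θ → ℕ) (x : TV θ) : coeff [] (actL q d x) = coeff [] x := by
  have : coeff [] ∘ₗ actL q d = coeff [] := word_ext fun w => by
    rcases w with _ | ⟨a, w⟩
    · rw [LinearMap.comp_apply, wordElem_nil, actL_one]
    · simp [actL_word, coeff_word]
  exact LinearMap.congr_fun this x

end Form

/-! ### Contractions of tensor products -/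

section Slices

variable {A A' W W' : Type*} [AddCommGroup A] [Module ℂ A] [AddCommGroup A'] [Module ℂ A']
  [AddCommGroup W] [Module ℂ W] [AddCommGroup W'] [Module ℂ W']

/-- The contraction `a ⊗ w ↦ f(w) a` of the right tensor factor. -/
def sliceR (f : W →ₗ[ℂ] ℂ) : A ⊗[ℂ] W →ₗ[ℂ] A :=
  (TensorProduct.rid ℂ A).toLinearMap ∘ₗ f.lTensor A

/-- The contraction `a ⊗ w ↦ f(a) w` of the left tensor factor. -/
def sliceL (f : A →ₗ[ℂ] ℂ) : A ⊗[ℂ] W →ₗ[ℂ] W :=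
  (TensorProduct.lid ℂ W).toLinearMap ∘ₗ f.rTensor W

theorem sliceR_tmul (f : W →ₗ[ℂ] ℂ) (a : A) (w : W) : sliceR f (a ⊗ₜ[ℂ] w) = f w • a := by
  simp [sliceR]

theorem sliceL_tmul (f : A →ₗ[ℂ] ℂ) (a : A) (w : W) : sliceL f (a ⊗ₜ[ℂ] w) = f a • w := by
  simp [sliceL]

theorem sliceR_zero : sliceR (0 : W →ₗ[ℂ] ℂ) = (0 : A ⊗[ℂ] W →ₗ[ℂ] A) := by
  simp [sliceR]

theorem sliceL_zero : sliceL (0 : A →ₗ[ℂ] ℂ) = (0 : A ⊗[ℂ] W →ₗ[ℂ] W) := by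
  simp [sliceL]

theorem sliceR_map (f : W' →ₗ[ℂ] ℂ) (g : A →ₗ[ℂ] A') (h : W →ₗ[ℂ] W') (z : A ⊗[ℂ] W) :
    sliceR f (TensorProduct.map g h z) = g (sliceR (f ∘ₗ h) z) := by
  have : sliceR f ∘ₗ TensorProduct.map g h = g ∘ₗ sliceR (f ∘ₗ h) :=
    TensorProduct.ext' fun a w => by simp [sliceR_tmul]
  exact LinearMap.congr_fun this z

theorem sliceL_map (f : A' →ₗ[ℂ] ℂ) (g : A →ₗ[ℂ] A') (h : W →ₗ[ℂ] W') (z : A ⊗[ℂ] W) :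
    sliceL f (TensorProduct.map g h z) = h (sliceL (f ∘ₗ g) z) := by
  have : sliceL f ∘ₗ TensorProduct.map g h = h ∘ₗ sliceL (f ∘ₗ g) :=
    TensorProduct.ext' fun a w => by simp [sliceL_tmul]
  exact LinearMap.congr_fun this z

theorem eq_zero_of_forall_sliceR {ι : Type*} {F : ι → W →ₗ[ℂ] ℂ}
    (hF : ∀ w, (∀ i, F i w = 0) → w = 0) {z : A ⊗[ℂ] W} (hz : ∀ i, sliceR (F i) z = 0) :
    z = 0 := by
  classical
  let B := Module.Basis.ofVectorSpace ℂ A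
  have key (i : ι) (n) (z : A ⊗[ℂ] W) :
      F i (TensorProduct.equivFinsuppOfBasisLeft B z n) = B.coord n (sliceR (F i) z) := by
    induction z using TensorProduct.induction_on with
    | zero => simp
    | add x y hx hy => simp only [map_add, Finsupp.add_apply, hx, hy]
    | tmul a y => simp [sliceR_tmul, mul_comm]
  rw [← (TensorProduct.equivFinsuppOfBasisLeft B).map_eq_zero_iff]
  ext n
  exact hF _ fun i => by rw [key, hz, map_zero]

end Slices

section MixedSub

variable {θ : ℕ} {I : Submodule ℂ (TV θ)}

theorem mixedSub_le {M : Submodule ℂ (TV θ ⊗[ℂ] TV θ)}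
    (hl : ∀ a b, a ∈ I → a ⊗ₜ b ∈ M) (hr : ∀ a b, b ∈ I → a ⊗ₜ b ∈ M) : mixedSub I ≤ M := by
  refine Submodule.span_le.2 ?_
  rintro _ (⟨a, b, ha, rfl⟩ | ⟨a, b, hb, rfl⟩)
  exacts [hl a b ha, hr a b hb]

theorem tmul_mem_mixedSub_left {a : TV θ} (ha : a ∈ I) (b : TV θ) : a ⊗ₜ[ℂ] b ∈ mixedSub I :=
  Submodule.subset_span (Or.inl ⟨a, b, ha, rfl⟩)

theorem tmul_mem_mixedSub_right (a : TV θ) {b : TV θ} (hb : b ∈ I) : a ⊗ₜ[ℂ] b ∈ mixedSub I :=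
  Submodule.subset_span (Or.inr ⟨a, b, hb, rfl⟩)

theorem mem_mixedSub_iff {z : TV θ ⊗[ℂ] TV θ} :
    z ∈ mixedSub I ↔ TensorProduct.map I.mkQ I.mkQ z = 0 := by
  rw [← LinearMap.mem_ker]
  refine ⟨fun hz => mixedSub_le (fun a b ha => ?_) (fun a b hb => ?_) hz, fun hz => ?_⟩
  · simp [(Submodule.Quotient.mk_eq_zero I).2 ha]
  · simp [(Submodule.Quotient.mk_eq_zero I).2 hb]
  · have hexact := LinearMap.exact_subtype_mkQ I
    have hsurj := I.mkQ_surjective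
    rw [TensorProduct.map_ker hexact hsurj hexact hsurj] at hz
    refine (sup_le ?_ ?_ : _ ≤ mixedSub I) hz <;>
      rw [← (mixedSub I).ker_mkQ, LinearMap.range_le_ker_iff] <;>
      refine TensorProduct.ext' fun a b => ?_
    · simpa using tmul_mem_mixedSub_right a b.2
    · simpa using tmul_mem_mixedSub_left a.2 b

theorem sliceR_mem {f : TV θ →ₗ[ℂ] ℂ} (hf : ∀ x ∈ I, f x = 0) {z : TV θ ⊗[ℂ] TV θ}
    (hz : z ∈ mixedSub I) : sliceR f z ∈ I :=
  (mixedSub_le (M := I.comap (sliceR f))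
    (fun a b ha => by simpa [sliceR_tmul] using I.smul_mem _ ha)
    (fun a b hb => by simp [sliceR_tmul, hf b hb])) hz

theorem sliceL_mem {f : TV θ →ₗ[ℂ] ℂ} (hf : ∀ x ∈ I, f x = 0) {z : TV θ ⊗[ℂ] TV θ}
    (hz : z ∈ mixedSub I) : sliceL f z ∈ I :=
  (mixedSub_le (M := I.comap (sliceL f))
    (fun a b ha => by simp [sliceL_tmul, hf a ha])
    (fun a b hb => by simpa [sliceL_tmul] using I.smul_mem _ hb)) hz

end MixedSub

/-! ### The braided coproduct -/

section Coproduct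

variable {θ : ℕ} {q : Fin θ → Fin θ → ℂˣ}

theorem mulB_tmul_word (S : BraidedStr θ q) (a b d : TV θ) (w : List (Fin θ)) :
    S.mulB (a ⊗ₜ b) (wordElem θ w ⊗ₜ d) = (a * wordElem θ w) ⊗ₜ (actR q (degW θ w) b * d) := by
  have : S.mulB.flip (wordElem θ w ⊗ₜ d) ∘ₗ TensorProduct.mk ℂ _ _ a =
      TensorProduct.mk ℂ _ _ (a * wordElem θ w) ∘ₗ LinearMap.mulRight ℂ d ∘ₗ
        actR q (degW θ w) := word_ext fun v => by
    simp [S.mulB_spec, actR_word]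
  exact LinearMap.congr_fun this b

theorem mulB_homog_tmul (S : BraidedStr θ q) {e : Fin θ → ℕ} (a c d : TV θ) {b : TV θ}
    (hb : b ∈ homogD θ e) :
    S.mulB (a ⊗ₜ b) (c ⊗ₜ d) = (a * actL q e c) ⊗ₜ (b * d) := by
  have : S.mulB (a ⊗ₜ b) ∘ₗ (TensorProduct.mk ℂ _ _).flip d =
      (TensorProduct.mk ℂ _ _).flip (b * d) ∘ₗ LinearMap.mulLeft ℂ a ∘ₗ actL q e :=
    word_ext fun v => by
      simp [mulB_tmul_word, actR_homog q hb, actL_word, TensorProduct.smul_tmul']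
  exact LinearMap.congr_fun this c

/-- Left multiplication by `y ⊗ 1 + 1 ⊗ y` in the braided tensor product, for `y` of degree `e`. -/
def primMul (q : Fin θ → Fin θ → ℂˣ) (e : Fin θ → ℕ) (y : TV θ) :
    TV θ ⊗[ℂ] TV θ →ₗ[ℂ] TV θ ⊗[ℂ] TV θ :=
  TensorProduct.map (LinearMap.mulLeft ℂ y) LinearMap.id +
    TensorProduct.map (actL q e) (LinearMap.mulLeft ℂ y)

theorem primMul_tmul (e : Fin θ → ℕ) (y u v : TV θ) :
    primMul q e y (u ⊗ₜ v) = (y * u) ⊗ₜ v + actL q e u ⊗ₜ (y * v) := by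
  simp [primMul]

theorem primMul_smul (c : ℂ) (e : Fin θ → ℕ) (y : TV θ) :
    primMul q e (c • y) = c • primMul q e y := by
  refine TensorProduct.ext' fun u v => ?_
  simp [primMul_tmul, TensorProduct.smul_tmul']

theorem sliceR_primMul (f : TV θ →ₗ[ℂ] ℂ) (e : Fin θ → ℕ) (y : TV θ) (z : TV θ ⊗[ℂ] TV θ) :
    sliceR f (primMul q e y z) =
      y * sliceR f z + actL q e (sliceR (f ∘ₗ LinearMap.mulLeft ℂ y) z) := by
  rw [primMul, LinearMap.add_apply, map_add, sliceR_map, sliceR_map]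
  rfl

theorem sliceL_primMul (f : TV θ →ₗ[ℂ] ℂ) (e : Fin θ → ℕ) (y : TV θ) (z : TV θ ⊗[ℂ] TV θ) :
    sliceL f (primMul q e y z) =
      sliceL (f ∘ₗ LinearMap.mulLeft ℂ y) z + y * sliceL (f ∘ₗ actL q e) z := by
  rw [primMul, LinearMap.add_apply, map_add, sliceL_map, sliceL_map]
  rfl

theorem map_actL_primMul (d e : Fin θ → ℕ) (y : TV θ) (z : TV θ ⊗[ℂ] TV θ) :
    TensorProduct.map (actL q d) (actL q d) (primMul q e y z) =
      primMul q e (actL q d y) (TensorProduct.map (actL q d) (actL q d) z) := by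
  have hcomm (u : TV θ) : actL q d (actL q e u) = actL q e (actL q d u) := by
    rw [← LinearMap.comp_apply, ← actL_add, add_comm, actL_add, LinearMap.comp_apply]
  have : TensorProduct.map (actL q d) (actL q d) ∘ₗ primMul q e y =
      primMul q e (actL q d y) ∘ₗ TensorProduct.map (actL q d) (actL q d) :=
    TensorProduct.ext' fun u v => by simp [primMul_tmul, actL_mul, hcomm]
  exact LinearMap.congr_fun this z

theorem mulB_primitive (S : BraidedStr θ q) {e : Fin θ → ℕ} {y : TV θ} (hy : y ∈ homogD θ e) :
    S.mulB (y ⊗ₜ 1 + 1 ⊗ₜ y) = primMul q e y := by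
  refine TensorProduct.ext' fun c d => ?_
  rw [map_add, LinearMap.add_apply, mulB_homog_tmul S _ _ _ one_mem_homogD,
    mulB_homog_tmul S _ _ _ hy, primMul_tmul, actL_zero]
  simp

theorem coprod_gen_mul (S : BraidedStr θ q) (a : Fin θ) (y : TV θ) :
    S.Δ (gen θ a * y) = primMul q (δ θ a) (gen θ a) (S.Δ y) := by
  rw [S.Δ_mul, S.Δ_gen, mulB_primitive S (gen_mem_homogD a)]

theorem coprod_mul_gen (S : BraidedStr θ q) (a : Fin θ) (y : TV θ) :
    S.Δ (y * gen θ a) =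
      TensorProduct.map (LinearMap.mulRight ℂ (gen θ a)) (actR q (δ θ a)) (S.Δ y) +
        TensorProduct.map LinearMap.id (LinearMap.mulRight ℂ (gen θ a)) (S.Δ y) := by
  have : S.mulB.flip (gen θ a ⊗ₜ 1 + 1 ⊗ₜ gen θ a) =
      TensorProduct.map (LinearMap.mulRight ℂ (gen θ a)) (actR q (δ θ a)) +
        TensorProduct.map LinearMap.id (LinearMap.mulRight ℂ (gen θ a)) :=
    TensorProduct.ext' fun u v => by
      have h1 := mulB_tmul_word S u v 1 [a]
      have h0 := mulB_tmul_word S u v (gen θ a) []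
      rw [wordElem_singleton, degW_cons, degW_nil, add_zero] at h1
      rw [wordElem_nil, degW_nil, actR_zero] at h0
      rw [LinearMap.flip_apply, map_add, h1, h0]
      simp
  rw [S.Δ_mul, S.Δ_gen, ← LinearMap.flip_apply, this, LinearMap.add_apply]

theorem coprod_actL (S : BraidedStr θ q) (d : Fin θ → ℕ) (y : TV θ) :
    S.Δ (actL q d y) = TensorProduct.map (actL q d) (actL q d) (S.Δ y) := by
  have : S.Δ ∘ₗ actL q d = TensorProduct.map (actL q d) (actL q d) ∘ₗ S.Δ := by
    refine gen_mul_ext (by simp [actL_one, S.Δ_one]) fun a y h => ?_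
    simp only [LinearMap.comp_apply] at h ⊢
    rw [coprod_gen_mul, map_actL_primMul, ← h, actL_gen_mul, map_smul, coprod_gen_mul,
      actL_homog q (gen_mem_homogD a), primMul_smul, LinearMap.smul_apply]
  exact LinearMap.congr_fun this y

theorem coeff_nil_comp_mulLeft_gen (a : Fin θ) : coeff [] ∘ₗ LinearMap.mulLeft ℂ (gen θ a) = 0 := by
  ext y
  simp [coeff_nil_mul, coeff_nil_gen]

theorem counit_right (S : BraidedStr θ q) (y : TV θ) : sliceR (coeff []) (S.Δ y) = y := by
  have : sliceR (coeff []) ∘ₗ S.Δ = LinearMap.id :=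
    gen_mul_ext (by simp [S.Δ_one, sliceR_tmul, coeff_nil_one]) fun a y h => by
      rw [LinearMap.comp_apply] at h
      rw [LinearMap.comp_apply, coprod_gen_mul, sliceR_primMul, h, coeff_nil_comp_mulLeft_gen,
        sliceR_zero]
      simp
  exact LinearMap.congr_fun this y

theorem counit_left (S : BraidedStr θ q) (y : TV θ) : sliceL (coeff []) (S.Δ y) = y := by
  have : sliceL (coeff []) ∘ₗ S.Δ = LinearMap.id :=
    gen_mul_ext (by simp [S.Δ_one, sliceL_tmul, coeff_nil_one]) fun a y h => by
      have hact : coeff [] ∘ₗ actL q (δ θ a) = coeff [] := LinearMap.ext (coeff_nil_actL q _)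
      rw [LinearMap.comp_apply] at h
      rw [LinearMap.comp_apply, coprod_gen_mul, sliceL_primMul, hact, h,
        coeff_nil_comp_mulLeft_gen, sliceL_zero]
      simp
  exact LinearMap.congr_fun this y

theorem sliceL_coprod_mul_gen (S : BraidedStr θ q) (a : Fin θ) (y : TV θ) :
    sliceL (coeff [a]) (S.Δ (y * gen θ a)) =
      sliceL (coeff [a]) (S.Δ y) * gen θ a + actR q (δ θ a) y := by
  have hcoeff : coeff [a] ∘ₗ LinearMap.mulRight ℂ (gen θ a) = coeff [] := by
    ext x
    simp [coeff_singleton_mul, coeff_nil_gen, coeff_singleton_gen]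
  rw [coprod_mul_gen, map_add, sliceL_map, sliceL_map, hcoeff, counit_left, LinearMap.comp_id,
    add_comm]
  rfl

end Coproduct

/-! ### Skew derivations -/

section Derivations

variable {θ : ℕ} (q : Fin θ → Fin θ → ℂˣ)

/-- The skew derivation `∂_b` on monomials. -/
def skewDerWord (b : Fin θ) : List (Fin θ) → TV θ
  | [] => 0
  | a :: w => gen θ a * skewDerWord b w +
      if a = b then qf q (δ θ a) (degW θ w) • wordElem θ w else 0

/-- The skew derivation `∂_b` of `T(V)`, with `∂_b(x_a) = δ_{ab}` and
`∂_b(xy) = x ∂_b(y) + q(α_b, deg y) ∂_b(x) y`. -/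
def skewDer (b : Fin θ) : TV θ →ₗ[ℂ] TV θ := (wordBasis θ).constr ℂ (skewDerWord q b)

theorem skewDer_word (b : Fin θ) (w : List (Fin θ)) :
    skewDer q b (wordElem θ w) = skewDerWord q b w := by
  rw [← wordBasis_apply, skewDer, Module.Basis.constr_basis]

theorem skewDer_one (b : Fin θ) : skewDer q b 1 = 0 := by
  rw [← wordElem_nil, skewDer_word]; rfl

theorem skewDer_gen_mul (a b : Fin θ) (y : TV θ) :
    skewDer q b (gen θ a * y) =
      gen θ a * skewDer q b y + if a = b then actL q (δ θ a) y else 0 := by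
  have : skewDer q b ∘ₗ LinearMap.mulLeft ℂ (gen θ a) =
      LinearMap.mulLeft ℂ (gen θ a) ∘ₗ skewDer q b + if a = b then actL q (δ θ a) else 0 :=
    word_ext fun w => by
      rw [LinearMap.comp_apply, LinearMap.mulLeft_apply, ← wordElem_cons, skewDer_word,
        skewDerWord, ← skewDer_word]
      split_ifs <;> simp [actL_word]
  refine (LinearMap.congr_fun this y).trans ?_
  split_ifs <;> simp

theorem skewDer_gen (a b : Fin θ) : skewDer q b (gen θ a) = if a = b then 1 else 0 := by
  have := skewDer_gen_mul q a b 1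
  rwa [mul_one, skewDer_one, mul_zero, zero_add, actL_one] at this

theorem skewDer_mul (b : Fin θ) (x y : TV θ) :
    skewDer q b (x * y) = x * skewDer q b y + skewDer q b x * actL q (δ θ b) y := by
  have : skewDer q b ∘ₗ LinearMap.mulRight ℂ y = LinearMap.mulRight ℂ (skewDer q b y) +
      LinearMap.mulRight ℂ (actL q (δ θ b) y) ∘ₗ skewDer q b := by
    refine gen_mul_ext (by simp [skewDer_one]) fun a x h => ?_
    simp only [LinearMap.comp_apply, LinearMap.mulRight_apply, LinearMap.add_apply] at h ⊢
    rw [mul_assoc, skewDer_gen_mul, h, skewDer_gen_mul]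
    split_ifs with hab
    · rw [← hab, actL_mul]; noncomm_ring
    · noncomm_ring
  exact LinearMap.congr_fun this x

theorem skewDer_word_mem (b : Fin θ) (w : List (Fin θ)) :
    skewDer q b (wordElem θ w) ∈ wordSpan fun v => δ θ b + degW θ v = degW θ w := by
  induction w with
  | nil => simp [wordElem_nil, skewDer_one]
  | cons a w ih =>
    rw [wordElem_cons, skewDer_gen_mul, ← wordElem_singleton]
    refine Submodule.add_mem _ (mul_mem_wordSpan (P := fun v => v = [a]) ?_
      (wordElem_mem_wordSpan rfl) ih) ?_
    · rintro _ v rfl hv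
      rw [degW_append, degW_cons, degW_cons, degW_nil, ← hv]
      abel
    · split_ifs with hab
      · rw [actL_word, hab]
        exact Submodule.smul_mem _ _ (wordElem_mem_wordSpan (degW_cons _ _).symm)
      · exact Submodule.zero_mem _

variable {q}

theorem skewDer_eq_sliceR (S : BraidedStr θ q) (b : Fin θ) (y : TV θ) :
    skewDer q b y = sliceR (coeff [b]) (S.Δ y) := by
  have : skewDer q b = sliceR (coeff [b]) ∘ₗ S.Δ := by
    refine gen_mul_ext (by simp [S.Δ_one, sliceR_tmul, skewDer_one, coeff_singleton_one])
      fun a y h => ?_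
    have hcoeff : coeff [b] ∘ₗ LinearMap.mulLeft ℂ (gen θ a) = if a = b then coeff [] else 0 := by
      ext y
      split_ifs with hab <;> simp [coeff_singleton_mul, coeff_nil_gen, coeff_singleton_gen, hab]
    rw [LinearMap.comp_apply] at h
    rw [LinearMap.comp_apply, coprod_gen_mul, sliceR_primMul, ← h, skewDer_gen_mul, hcoeff]
    split_ifs
    · rw [counit_right]
    · rw [sliceR_zero, LinearMap.zero_apply, map_zero]
  exact LinearMap.congr_fun this y

theorem map_skewDer_primMul (a b : Fin θ) (z : TV θ ⊗[ℂ] TV θ) :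
    TensorProduct.map LinearMap.id (skewDer q b) (primMul q (δ θ a) (gen θ a) z) =
      primMul q (δ θ a) (gen θ a) (TensorProduct.map LinearMap.id (skewDer q b) z) +
        if a = b then TensorProduct.map (actL q (δ θ a)) (actL q (δ θ a)) z else 0 := by
  induction z using TensorProduct.induction_on with
  | zero => simp
  | add x y hx hy =>
    simp only [map_add, hx, hy]
    split_ifs <;> abel
  | tmul u v =>
    simp only [primMul_tmul, map_add, TensorProduct.map_tmul, LinearMap.id_apply,
      skewDer_gen_mul, TensorProduct.tmul_add]
    split_ifs
    · abel
    · simp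

theorem coprod_skewDer (S : BraidedStr θ q) (b : Fin θ) (y : TV θ) :
    S.Δ (skewDer q b y) = TensorProduct.map LinearMap.id (skewDer q b) (S.Δ y) := by
  have : S.Δ ∘ₗ skewDer q b = TensorProduct.map LinearMap.id (skewDer q b) ∘ₗ S.Δ := by
    refine gen_mul_ext (by simp [S.Δ_one, skewDer_one]) fun a y h => ?_
    simp only [LinearMap.comp_apply] at h ⊢
    rw [coprod_gen_mul, map_skewDer_primMul, skewDer_gen_mul, map_add, coprod_gen_mul, h]
    split_ifs
    · rw [coprod_actL]
    · rw [map_zero]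
  exact LinearMap.congr_fun this y

variable (q) in
/-- The linear form `ε ∘ ∂_{b_n} ∘ ⋯ ∘ ∂_{b_1}` attached to the word `b_1 ⋯ b_n`. -/
def derForm : List (Fin θ) → TV θ →ₗ[ℂ] ℂ
  | [] => coeff []
  | b :: v => derForm v ∘ₗ skewDer q b

theorem derForm_singleton (b : Fin θ) : derForm q [b] = coeff [b] := by
  refine gen_mul_ext ?_ fun a y _ => ?_
  · simp [derForm, skewDer_one, coeff_singleton_one]
  · rw [derForm, LinearMap.comp_apply, derForm, skewDer_gen_mul, map_add, coeff_nil_mul,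
      coeff_singleton_mul, coeff_nil_gen, coeff_singleton_gen]
    split_ifs <;> simp [coeff_nil_actL]

theorem derForm_word_of_ne {v w : List (Fin θ)} (h : degW θ v ≠ degW θ w) :
    derForm q v (wordElem θ w) = 0 := by
  induction v generalizing w with
  | nil => exact (coeff_word _ _).trans (if_neg (by rintro rfl; exact h rfl))
  | cons b v ih =>
    refine map_eq_of_mem_wordSpan (F := derForm q v) (G := 0) (fun u hu => ih fun hvu => h ?_)
      (skewDer_word_mem q b w)
    rw [degW_cons, hvu, hu]

theorem derForm_sliceR_coprod (S : BraidedStr θ q) (v w : List (Fin θ)) (y : TV θ) :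
    derForm q v (sliceR (derForm q w) (S.Δ y)) = derForm q (w ++ v) y := by
  induction w generalizing y with
  | nil => rw [List.nil_append, derForm, counit_right]
  | cons b w ih =>
    rw [List.cons_append, derForm, derForm, LinearMap.comp_apply, ← ih, coprod_skewDer, sliceR_map,
      LinearMap.id_apply]

end Derivations

/-! ### The common kernel of the iterated skew derivations -/

section DerKer

variable {θ : ℕ} {q : Fin θ → Fin θ → ℂˣ}

variable (q) in
/-- The joint kernel of the forms `ε ∘ ∂_{b_n} ∘ ⋯ ∘ ∂_{b_1}`. It is the defining ideal of the
Nichols algebra, of which only the inclusion `derKer_le_Jq` is needed. -/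
def derKer : Submodule ℂ (TV θ) := ⨅ v, LinearMap.ker (derForm q v)

theorem mem_derKer {x : TV θ} : x ∈ derKer q ↔ ∀ v, derForm q v x = 0 := by
  simp [derKer]

theorem mem_derKer_iff_skewDer {x : TV θ} :
    x ∈ derKer q ↔ coeff [] x = 0 ∧ ∀ b, skewDer q b x ∈ derKer q := by
  simp only [mem_derKer]
  constructor
  · exact fun h => ⟨h [], fun b v => h (b :: v)⟩
  · rintro ⟨h0, h⟩ (_ | ⟨b, v⟩)
    · exact h0
    · exact h b v

theorem diag_mem_derKer {f : List (Fin θ) → ℂ} (hf : ∀ v w, degW θ v = degW θ w → f v = f w)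
    {x : TV θ} (hx : x ∈ derKer q) : diag f x ∈ derKer q := by
  rw [mem_derKer] at hx ⊢
  intro v
  have : derForm q v ∘ₗ diag f = f v • derForm q v := word_ext fun w => by
    rw [LinearMap.comp_apply, diag_word, map_smul, LinearMap.smul_apply]
    by_cases h : degW θ v = degW θ w
    · rw [hf _ _ h]
    · rw [derForm_word_of_ne h, smul_zero, smul_zero]
  rw [← LinearMap.comp_apply, this, LinearMap.smul_apply, hx, smul_zero]

theorem actL_mem_derKer (d : Fin θ → ℕ) {x : TV θ} (hx : x ∈ derKer q) :
    actL q d x ∈ derKer q :=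
  diag_mem_derKer (fun v w h => by rw [h]) hx

theorem gen_mul_mem_derKer (a : Fin θ) {x : TV θ} (hx : x ∈ derKer q) :
    gen θ a * x ∈ derKer q := by
  rw [mem_derKer]
  intro v
  induction v generalizing x with
  | nil => rw [derForm, coeff_nil_mul, coeff_nil_gen, zero_mul]
  | cons b v ih =>
    rw [derForm, LinearMap.comp_apply, skewDer_gen_mul, map_add,
      ih ((mem_derKer_iff_skewDer.1 hx).2 b), zero_add]
    split_ifs
    · exact mem_derKer.1 (actL_mem_derKer _ hx) v
    · exact map_zero _

theorem mul_gen_mem_derKer (a : Fin θ) {x : TV θ} (hx : x ∈ derKer q) :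
    x * gen θ a ∈ derKer q := by
  rw [mem_derKer]
  intro v
  induction v generalizing x with
  | nil => rw [derForm, coeff_nil_mul, coeff_nil_gen, mul_zero]
  | cons b v ih =>
    rw [derForm, LinearMap.comp_apply, skewDer_mul, map_add, actL_homog q (gen_mem_homogD a),
      mul_smul_comm, map_smul, ih ((mem_derKer_iff_skewDer.1 hx).2 b), smul_zero, add_zero,
      skewDer_gen]
    split_ifs
    · rw [mul_one]; exact mem_derKer.1 hx v
    · rw [mul_zero, map_zero]

theorem mul_mem_derKer_left (a : TV θ) {x : TV θ} (hx : x ∈ derKer q) : a * x ∈ derKer q :=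
  map_mem_of_forall_word (F := LinearMap.mulRight ℂ x) (fun w => by
    induction w with
    | nil => simpa [wordElem_nil] using hx
    | cons b w ih => simpa [wordElem_cons, mul_assoc] using gen_mul_mem_derKer b ih) a

theorem mul_mem_derKer_right (a : TV θ) {x : TV θ} (hx : x ∈ derKer q) : x * a ∈ derKer q :=
  map_mem_of_forall_word (F := LinearMap.mulLeft ℂ x) (fun w => by
    induction w generalizing x with
    | nil => simpa [wordElem_nil] using hx
    | cons b w ih => simpa [wordElem_cons, mul_assoc] using ih (mul_gen_mem_derKer b hx)) a

theorem coprod_mem_mixedSub_derKer (S : BraidedStr θ q) {x : TV θ} (hx : x ∈ derKer q) :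
    S.Δ x ∈ mixedSub (derKer q) := by
  let F (v : List (Fin θ)) : (TV θ ⧸ derKer q) →ₗ[ℂ] ℂ :=
    (derKer q).liftQ (derForm q v) (iInf_le _ v)
  have hmk (v : List (Fin θ)) (y : TV θ) : F v ((derKer q).mkQ y) = derForm q v y := rfl
  have hF (y) (hy : ∀ v, F v y = 0) : y = 0 := by
    obtain ⟨y, rfl⟩ := (derKer q).mkQ_surjective y
    rw [Submodule.mkQ_apply, Submodule.Quotient.mk_eq_zero, mem_derKer]
    exact hy
  rw [mem_mixedSub_iff]
  refine eq_zero_of_forall_sliceR hF fun w => hF _ fun v => ?_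
  rw [sliceR_map, hmk, show F w ∘ₗ (derKer q).mkQ = derForm q w from rfl, derForm_sliceR_coprod]
  exact mem_derKer.1 hx _

theorem lenProj_mem_derKer (n : ℕ) {x : TV θ} (hx : x ∈ derKer q) : lenProj θ n x ∈ derKer q :=
  diag_mem_derKer (fun v w h => by simp only [length_eq_sum_degW, h]) hx

theorem degProj_mem_derKer (d : Fin θ → ℕ) {x : TV θ} (hx : x ∈ derKer q) :
    degProj d x ∈ derKer q :=
  diag_mem_derKer (fun v w h => by simp only [h]) hx

theorem lenProj_eq_zero_of_mem_derKer {n : ℕ} (hn : n < 2) {x : TV θ} (hx : x ∈ derKer q) :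
    lenProj θ n x = 0 := by
  rw [mem_derKer] at hx
  interval_cases n
  · rw [lenProj_zero, show coeff [] x = 0 from hx [], zero_smul]
  · rw [lenProj_one]
    exact Finset.sum_eq_zero fun b _ => by rw [← derForm_singleton (q := q), hx, zero_smul]

theorem derKer_isPreNicholsIdeal (S : BraidedStr θ q) : IsPreNicholsIdeal S (derKer q) where
  mul_left a _ hx := mul_mem_derKer_left a hx
  mul_right a _ hx := mul_mem_derKer_right a hx
  coideal _ hx := coprod_mem_mixedSub_derKer S hx
  homog_ge2 := by
    refine le_antisymm (fun x hx => ?_) (Submodule.span_le.2 fun x hx => hx.1)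
    obtain ⟨N, hN⟩ := exists_mem_Wfil x
    rw [← sum_lenProj_of_mem_Wfil hN]
    refine Submodule.sum_mem _ fun n _ => ?_
    obtain hn | hn := lt_or_ge n 2
    · rw [lenProj_eq_zero_of_mem_derKer hn hx]
      exact Submodule.zero_mem _
    · exact Submodule.subset_span ⟨lenProj_mem_derKer n hx, n, hn, wordProj_mem _ x⟩

theorem derKer_le_Jq (S : BraidedStr θ q) : derKer q ≤ Jq S :=
  le_sSup (derKer_isPreNicholsIdeal S)

end DerKer

section Existence

variable {θ : ℕ} (q : Fin θ → Fin θ → ℂˣ)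

/-- Right multiplication by `c ⊗ 1` in the braided tensor product. -/
def braidedMulRight : TV θ →ₗ[ℂ] Module.End ℂ (TV θ ⊗[ℂ] TV θ) :=
  (wordBasis θ).constr ℂ fun w =>
    TensorProduct.map (LinearMap.mulRight ℂ (wordElem θ w)) (actR q (degW θ w))

theorem braidedMulRight_word (w : List (Fin θ)) :
    braidedMulRight q (wordElem θ w) =
      TensorProduct.map (LinearMap.mulRight ℂ (wordElem θ w)) (actR q (degW θ w)) := by
  rw [← wordBasis_apply, braidedMulRight, Module.Basis.constr_basis, wordBasis_apply]

/-- The multiplication of the braided tensor product. -/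
def braidedMul : TV θ ⊗[ℂ] TV θ →ₗ[ℂ] TV θ ⊗[ℂ] TV θ →ₗ[ℂ] TV θ ⊗[ℂ] TV θ :=
  (TensorProduct.lift (LinearMap.mk₂ ℂ
    (fun c d => TensorProduct.map LinearMap.id (LinearMap.mulRight ℂ d) ∘ₗ braidedMulRight q c)
    (fun c c' d => by rw [map_add]; exact LinearMap.comp_add _ _ _)
    (fun r c d => by rw [map_smul]; exact LinearMap.comp_smul _ _ _)
    (fun c d d' => by
      rw [← LinearMap.add_comp, ← TensorProduct.map_add_right]
      congr 2; ext; simp [mul_add])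
    (fun r c d => by
      rw [← LinearMap.smul_comp, ← TensorProduct.map_smul_right]
      congr 2; ext; simp))).flip

theorem braidedMul_word (a b d : TV θ) (w : List (Fin θ)) :
    braidedMul q (a ⊗ₜ b) (wordElem θ w ⊗ₜ d) =
      (a * wordElem θ w) ⊗ₜ (actR q (degW θ w) b * d) := by
  simp [braidedMul, braidedMulRight_word]

theorem primMul_braidedMul (a : Fin θ) (z : TV θ ⊗[ℂ] TV θ) :
    braidedMul q (primMul q (δ θ a) (gen θ a) z) =
      primMul q (δ θ a) (gen θ a) ∘ₗ braidedMul q z := by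
  have : braidedMul q ∘ₗ primMul q (δ θ a) (gen θ a) =
      LinearMap.llcomp ℂ _ _ _ (primMul q (δ θ a) (gen θ a)) ∘ₗ braidedMul q := by
    refine word_tmul_ext fun v w => word_tmul_ext fun c d => ?_
    simp only [LinearMap.comp_apply, LinearMap.llcomp_apply, primMul_tmul, map_add,
      LinearMap.add_apply, braidedMul_word, actL_word, actR_word, smul_mul_assoc,
      ← TensorProduct.smul_tmul', TensorProduct.tmul_smul, ← wordElem_cons, ← wordElem_append,
      degW_cons, degW_append, qf_add_left, qf_add_right, map_smul, LinearMap.smul_apply, smul_smul,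
      smul_add, List.cons_append]
    congr 2
    ring
  exact LinearMap.congr_fun this z

/-- Left multiplication by `Δ(u)` in the braided tensor product, as a function of `u`. -/
def coprodMul : TV θ →ₐ[ℂ] Module.End ℂ (TV θ ⊗[ℂ] TV θ) :=
  FreeAlgebra.lift ℂ fun a => primMul q (δ θ a) (gen θ a)

theorem coprodMul_gen (a : Fin θ) : coprodMul q (gen θ a) = primMul q (δ θ a) (gen θ a) :=
  FreeAlgebra.lift_ι_apply _ _

theorem braidedMul_coprodMul_one (u : TV θ) :
    braidedMul q (coprodMul q u (1 ⊗ₜ 1)) = coprodMul q u := by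
  have : braidedMul q ∘ₗ LinearMap.applyₗ (1 ⊗ₜ 1) ∘ₗ (coprodMul q).toLinearMap =
      (coprodMul q).toLinearMap := by
    refine gen_mul_ext (word_tmul_ext fun v w => ?_) fun a y h => ?_
    · simp [braidedMul_word, actR_one]
    · simp only [LinearMap.comp_apply, AlgHom.toLinearMap_apply, LinearMap.applyₗ_apply_apply,
        map_mul, Module.End.mul_apply, coprodMul_gen, primMul_braidedMul] at h ⊢
      rw [h, Module.End.mul_eq_comp]
  exact LinearMap.congr_fun this u

/-- The braided bialgebra structure of `T(V)`. -/
def braidedStr : BraidedStr θ q where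
  Δ := LinearMap.applyₗ (1 ⊗ₜ 1) ∘ₗ (coprodMul q).toLinearMap
  mulB := braidedMul q
  mulB_spec a d wb wc := by
    rw [braidedMul_word, actR_word, smul_mul_assoc, TensorProduct.tmul_smul]
  Δ_one := by simp
  Δ_gen i := by simp [coprodMul_gen, primMul_tmul, actL_one]
  Δ_mul u v := by
    simp only [LinearMap.comp_apply, AlgHom.toLinearMap_apply, LinearMap.applyₗ_apply_apply,
      map_mul, Module.End.mul_apply, braidedMul_coprodMul_one]

end Existence

/-! ### Pre-Nichols ideals -/

section PreNichols

variable {θ : ℕ} {q : Fin θ → Fin θ → ℂˣ} {S : BraidedStr θ q} {I : Submodule ℂ (TV θ)}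

theorem IsPreNicholsIdeal.map_mem (hI : IsPreNicholsIdeal S I) {M : Type*} [AddCommGroup M]
    [Module ℂ M] {F : TV θ →ₗ[ℂ] M} {N : Submodule ℂ M}
    (h : ∀ n, 2 ≤ n → ∀ x ∈ I, x ∈ homogTot θ n → F x ∈ N) {x : TV θ} (hx : x ∈ I) : F x ∈ N :=
  (Submodule.span_le (p := N.comap F)).2 (by rintro y ⟨hy, n, hn, hyn⟩; exact h n hn y hy hyn)
    (hI.homog_ge2.le hx)

theorem IsPreNicholsIdeal.coeff_eq_zero (hI : IsPreNicholsIdeal S I) {v : List (Fin θ)}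
    (hv : v.length < 2) {x : TV θ} (hx : x ∈ I) : coeff v x = 0 :=
  (Submodule.mem_bot ℂ).1 <| hI.map_mem (fun _ hn _ _ hy =>
    (Submodule.mem_bot ℂ).2 (coeff_eq_zero_of_mem_wordSpan (by omega) hy)) hx

theorem IsPreNicholsIdeal.lenProj_mem (hI : IsPreNicholsIdeal S I) (n : ℕ) {x : TV θ}
    (hx : x ∈ I) : lenProj θ n x ∈ I := by
  refine hI.map_mem (fun m _ y hyI hy => ?_) hx
  obtain rfl | hmn := eq_or_ne m n
  · rwa [wordProj_of_mem _ hy]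
  · rw [wordProj_eq_zero _ (fun w hw => by rwa [hw]) hy]
    exact I.zero_mem

theorem IsPreNicholsIdeal.skewDer_mem (hI : IsPreNicholsIdeal S I) (b : Fin θ) {x : TV θ}
    (hx : x ∈ I) : skewDer q b x ∈ I := by
  rw [skewDer_eq_sliceR S]
  exact sliceR_mem (fun y hy => hI.coeff_eq_zero (by simp) hy) (hI.coideal x hx)

theorem degree_induction {p : (Fin θ → ℕ) → Prop} (zero : p 0) (single : ∀ a, p (δ θ a))
    (add : ∀ d e, p d → p e → p (d + e)) (d : Fin θ → ℕ) : p d := by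
  let M : AddSubmonoid (Fin θ → ℕ) :=
    { carrier := {d | p d}, zero_mem' := zero, add_mem' := fun {a b} ha hb => add a b ha hb }
  have hd : d = ∑ a, d a • δ θ a := by
    ext b
    simp [Finset.sum_apply, δ]
  have : d ∈ M := hd ▸ sum_mem fun a _ => M.nsmul_mem (single a) _
  exact this

theorem IsPreNicholsIdeal.actL_mem (hI : IsPreNicholsIdeal S I) (d : Fin θ → ℕ) {x : TV θ}
    (hx : x ∈ I) : actL q d x ∈ I := by
  induction d using degree_induction generalizing x with
  | zero => rwa [actL_zero]
  | add d e hd he => rw [actL_add]; exact hd (he hx)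
  | single a =>
    have h := hI.skewDer_mem a (hI.mul_left (gen θ a) x hx)
    rw [skewDer_gen_mul, if_pos rfl] at h
    exact (I.add_mem_iff_right (hI.mul_left _ _ (hI.skewDer_mem a hx))).1 h

theorem IsPreNicholsIdeal.actR_mem (hI : IsPreNicholsIdeal S I) (d : Fin θ → ℕ) {x : TV θ}
    (hx : x ∈ I) : actR q d x ∈ I := by
  induction d using degree_induction generalizing x with
  | zero => rwa [actR_zero]
  | add d e hd he => rw [actR_add]; exact hd (he hx)
  | single a =>
    have hslice {y : TV θ} (hy : y ∈ I) : sliceL (coeff [a]) (S.Δ y) ∈ I :=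
      sliceL_mem (fun z hz => hI.coeff_eq_zero (by simp) hz) (hI.coideal y hy)
    have h := hslice (hI.mul_right (gen θ a) x hx)
    rw [sliceL_coprod_mul_gen] at h
    exact (I.add_mem_iff_right (hI.mul_right _ _ (hslice hx))).1 h

theorem IsPreNicholsIdeal.primMul_mem (hI : IsPreNicholsIdeal S I) (e : Fin θ → ℕ) (y : TV θ)
    {z : TV θ ⊗[ℂ] TV θ} (hz : z ∈ mixedSub I) : primMul q e y z ∈ mixedSub I := by
  refine mixedSub_le (M := (mixedSub I).comap (primMul q e y)) (fun a b ha => ?_)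
    (fun a b hb => ?_) hz <;> rw [Submodule.mem_comap, primMul_tmul]
  · exact Submodule.add_mem _ (tmul_mem_mixedSub_left (hI.mul_left _ _ ha) _)
      (tmul_mem_mixedSub_left (hI.actL_mem _ ha) _)
  · exact Submodule.add_mem _ (tmul_mem_mixedSub_right _ hb)
      (tmul_mem_mixedSub_right _ (hI.mul_left _ _ hb))

theorem IsPreNicholsIdeal.mulB_mem (hI : IsPreNicholsIdeal S I) {m : TV θ ⊗[ℂ] TV θ}
    (hm : m ∈ mixedSub I) (z : TV θ ⊗[ℂ] TV θ) : S.mulB m z ∈ mixedSub I := by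
  have hword (v w : List (Fin θ)) : S.mulB m (wordElem θ v ⊗ₜ wordElem θ w) ∈ mixedSub I := by
    refine mixedSub_le (M := (mixedSub I).comap (S.mulB.flip (wordElem θ v ⊗ₜ wordElem θ w)))
      (fun a b ha => ?_) (fun a b hb => ?_) hm <;>
      rw [Submodule.mem_comap, LinearMap.flip_apply, mulB_tmul_word]
    · exact tmul_mem_mixedSub_left (hI.mul_right _ _ ha) _
    · exact tmul_mem_mixedSub_right _ (hI.mul_right _ _ (hI.actR_mem _ hb))
  have : (mixedSub I).mkQ ∘ₗ S.mulB m = 0 :=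
    word_tmul_ext fun v w => (Submodule.Quotient.mk_eq_zero _).2 (hword v w)
  exact (Submodule.Quotient.mk_eq_zero _).1 (LinearMap.congr_fun this z)

/-- `y` is primitive in the quotient of `T(V)` by `I`. -/
def IsPrimitiveMod (S : BraidedStr θ q) (I : Submodule ℂ (TV θ)) (y : TV θ) : Prop :=
  S.Δ y - (y ⊗ₜ 1 + 1 ⊗ₜ y) ∈ mixedSub I

end PreNichols

/-! ### Subalgebras generated by elements primitive modulo a pre-Nichols ideal -/

section GenLift

variable {θ θ' : ℕ} {q : Fin θ → Fin θ → ℂˣ} {S : BraidedStr θ q} {I : Submodule ℂ (TV θ)}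
  {q' : Fin θ' → Fin θ' → ℂˣ} {y : Fin θ' → TV θ} {d : Fin θ' → Fin θ → ℕ}

/-- The algebra map `T(V') → T(V)` sending the generators to a given family. -/
def genLift (y : Fin θ' → TV θ) : TV θ' →ₐ[ℂ] TV θ := FreeAlgebra.lift ℂ y

theorem genLift_gen (y : Fin θ' → TV θ) (b : Fin θ') : genLift y (gen θ' b) = y b :=
  FreeAlgebra.lift_ι_apply _ _

theorem coeff_nil_genLift (hy : ∀ b, coeff [] (y b) = 0) (x : TV θ') :
    coeff [] (genLift y x) = coeff [] x := by
  have : coeff [] ∘ₗ (genLift y).toLinearMap = coeff [] :=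
    gen_mul_ext (by simp [coeff_nil_one]) fun b x _ => by
      simp [coeff_nil_mul, genLift_gen, hy, coeff_nil_gen]
  exact LinearMap.congr_fun this x

theorem coeff_singleton_genLift (hy : ∀ b, coeff [] (y b) = 0) (s : Fin θ) (x : TV θ') :
    coeff [s] (genLift y x) = ∑ b, coeff [s] (y b) * coeff [b] x := by
  have : coeff [s] ∘ₗ (genLift y).toLinearMap = ∑ b, coeff [s] (y b) • coeff [b] :=
    gen_mul_ext (by simp [coeff_singleton_one, LinearMap.sum_apply]) fun b x _ => by
      simp [coeff_singleton_mul, genLift_gen, hy, coeff_nil_gen, coeff_singleton_gen,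
        coeff_nil_genLift hy, LinearMap.sum_apply]
  rw [← AlgHom.toLinearMap_apply, ← LinearMap.comp_apply, this, LinearMap.sum_apply]
  rfl

theorem actL_genLift (hd : ∀ b, y b ∈ homogD θ (d b))
    (hq' : ∀ b c, (q' b c : ℂ) = qf q (d b) (d c)) (b : Fin θ') (x : TV θ') :
    genLift y (actL q' (δ θ' b) x) = actL q (d b) (genLift y x) := by
  have : (genLift y).toLinearMap ∘ₗ actL q' (δ θ' b) =
      actL q (d b) ∘ₗ (genLift y).toLinearMap := by
    refine gen_mul_ext (by simp [actL_one]) fun a x h => ?_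
    simp only [LinearMap.comp_apply, AlgHom.toLinearMap_apply] at h ⊢
    rw [actL_gen_mul, map_smul, map_mul, map_mul, actL_mul, genLift_gen, actL_homog q (hd a), h,
      qf_δ, hq', smul_mul_assoc]
  exact LinearMap.congr_fun this x

theorem map_genLift_primMul (hd : ∀ b, y b ∈ homogD θ (d b))
    (hq' : ∀ b c, (q' b c : ℂ) = qf q (d b) (d c)) (a : Fin θ') (z : TV θ' ⊗[ℂ] TV θ') :
    TensorProduct.map (genLift y).toLinearMap (genLift y).toLinearMap
        (primMul q' (δ θ' a) (gen θ' a) z) =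
      primMul q (d a) (y a)
        (TensorProduct.map (genLift y).toLinearMap (genLift y).toLinearMap z) := by
  induction z using TensorProduct.induction_on with
  | zero => simp
  | add u v hu hv => simp only [map_add, hu, hv]
  | tmul u v => simp [primMul_tmul, genLift_gen, actL_genLift hd hq']

theorem coprod_genLift_sub_mem (hI : IsPreNicholsIdeal S I) (S' : BraidedStr θ' q')
    (hd : ∀ b, y b ∈ homogD θ (d b)) (hq' : ∀ b c, (q' b c : ℂ) = qf q (d b) (d c))
    (hprim : ∀ b, IsPrimitiveMod S I (y b)) (x : TV θ') :
    S.Δ (genLift y x) - TensorProduct.map (genLift y).toLinearMap (genLift y).toLinearMap (S'.Δ x)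
      ∈ mixedSub I := by
  have key : (mixedSub I).mkQ ∘ₗ S.Δ ∘ₗ (genLift y).toLinearMap = (mixedSub I).mkQ ∘ₗ
      TensorProduct.map (genLift y).toLinearMap (genLift y).toLinearMap ∘ₗ S'.Δ := by
    refine gen_mul_ext (by simp [S.Δ_one, S'.Δ_one]) fun a x h => ?_
    simp only [LinearMap.comp_apply, AlgHom.toLinearMap_apply, Submodule.mkQ_apply,
      Submodule.Quotient.eq] at h ⊢
    have hy := hI.mulB_mem (hprim a) (S.Δ (genLift y x))
    rw [map_sub, LinearMap.sub_apply, mulB_primitive S (hd a)] at hy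
    have hx := hI.primMul_mem (d a) (y a) h
    rw [map_sub] at hx
    rw [map_mul, genLift_gen, S.Δ_mul, coprod_gen_mul, map_genLift_primMul hd hq',
      ← sub_add_sub_cancel]
    exact Submodule.add_mem _ hy hx
  exact (Submodule.Quotient.eq _).1 (LinearMap.congr_fun key x)

theorem comap_genLift_le_derKer (hI : IsPreNicholsIdeal S I)
    (hd : ∀ b, y b ∈ homogD θ (d b)) (hq' : ∀ b c, (q' b c : ℂ) = qf q (d b) (d c))
    (hprim : ∀ b, IsPrimitiveMod S I (y b)) (hy : ∀ b, coeff [] (y b) = 0)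
    (hf : ∀ b, ∃ f : TV θ →ₗ[ℂ] ℂ, (∀ x ∈ I, f x = 0) ∧ ∀ x, f (genLift y x) = coeff [b] x) :
    I.comap (genLift y).toLinearMap ≤ derKer q' := by
  intro x hx
  rw [Submodule.mem_comap, AlgHom.toLinearMap_apply] at hx
  rw [mem_derKer]
  intro v
  induction v generalizing x with
  | nil => rw [derForm, ← coeff_nil_genLift hy]; exact hI.coeff_eq_zero (by simp) hx
  | cons b _ ih =>
    refine ih ?_
    obtain ⟨f, hfI, hfy⟩ := hf b
    have hfb : f ∘ₗ (genLift y).toLinearMap = coeff [b] := LinearMap.ext hfy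
    rw [skewDer_eq_sliceR (braidedStr q'), ← hfb, ← AlgHom.toLinearMap_apply, ← sliceR_map]
    refine sliceR_mem hfI ?_
    have := Submodule.sub_mem _ (hI.coideal _ hx)
      (coprod_genLift_sub_mem hI (braidedStr q') hd hq' hprim x)
    rwa [sub_sub_cancel] at this

end GenLift

section Growth

theorem finrank_map_le_of_ker_le {K V A B : Type*} [DivisionRing K] [AddCommGroup V] [Module K V]
    [AddCommGroup A] [Module K A] [AddCommGroup B] [Module K B] {f : V →ₗ[K] A} {g : V →ₗ[K] B}
    (h : LinearMap.ker g ≤ LinearMap.ker f) (W : Submodule K V) [FiniteDimensional K W] :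
    Module.finrank K (W.map f) ≤ Module.finrank K (W.map g) := by
  have hf := LinearMap.finrank_range_add_finrank_ker (f.domRestrict W)
  have hg := LinearMap.finrank_range_add_finrank_ker (g.domRestrict W)
  have hle : LinearMap.ker (g.domRestrict W) ≤ LinearMap.ker (f.domRestrict W) :=
    fun x hx => h hx
  have := Submodule.finrank_mono hle
  rw [LinearMap.range_domRestrict] at hf hg
  omega

variable {θ θ' : ℕ}

theorem Wfil_mono {m n : ℕ} (h : m ≤ n) : Wfil θ m ≤ Wfil θ n :=
  Submodule.span_mono fun _ ⟨w, hw, hx⟩ => ⟨w, hw.trans h, hx⟩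

theorem mul_mem_Wfil {m n : ℕ} {x y : TV θ} (hx : x ∈ Wfil θ m) (hy : y ∈ Wfil θ n) :
    x * y ∈ Wfil θ (m + n) :=
  mul_mem_wordSpan (fun v w hv hw => by rw [List.length_append]; exact add_le_add hv hw) hx hy

theorem homogTot_le_Wfil (n : ℕ) : homogTot θ n ≤ Wfil θ n :=
  Submodule.span_mono fun _ ⟨w, hw, hx⟩ => ⟨w, hw.le, hx⟩

instance Wfil_finiteDimensional (n : ℕ) : FiniteDimensional ℂ (Wfil θ n) := by
  refine FiniteDimensional.span_of_finite ℂ ?_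
  refine ((List.finite_length_le (Fin θ) n).image (wordElem θ)).subset ?_
  rintro _ ⟨w, hw, rfl⟩
  exact ⟨w, hw, rfl⟩

variable {y : Fin θ' → TV θ}

theorem genLift_word_mem_Wfil {N : ℕ} (hy : ∀ b, y b ∈ Wfil θ N) (w : List (Fin θ')) :
    genLift y (wordElem θ' w) ∈ Wfil θ (N * w.length) := by
  induction w with
  | nil =>
    rw [wordElem_nil, map_one, ← wordElem_nil]
    exact wordElem_mem_wordSpan (Nat.zero_le _)
  | cons a w ih =>
    rw [wordElem_cons, map_mul, genLift_gen, List.length_cons, mul_add, mul_one, add_comm]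
    exact mul_mem_Wfil (hy a) ih

theorem FinGK_of_comap_genLift_le {I : Submodule ℂ (TV θ)} {J : Submodule ℂ (TV θ')} {N : ℕ}
    (hy : ∀ b, y b ∈ Wfil θ N) (hle : I.comap (genLift y).toLinearMap ≤ J) (hGK : FinGK I) :
    FinGK J := by
  obtain ⟨C, e, hC⟩ := hGK
  refine ⟨C * (N + 1) ^ e, e, fun m => ?_⟩
  have hmap : (Wfil θ' m).map (I.mkQ ∘ₗ (genLift y).toLinearMap) ≤
      (Wfil θ (N * m)).map I.mkQ := by
    rw [Submodule.map_comp]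
    refine Submodule.map_mono ?_
    rw [Wfil, Submodule.map_span_le]
    rintro _ ⟨w, hw, rfl⟩
    exact Wfil_mono (Nat.mul_le_mul_left _ hw) (genLift_word_mem_Wfil hy w)
  calc Module.finrank ℂ ((Wfil θ' m).map J.mkQ)
      ≤ Module.finrank ℂ ((Wfil θ' m).map (I.mkQ ∘ₗ (genLift y).toLinearMap)) := by
        refine finrank_map_le_of_ker_le ?_ _
        rwa [Submodule.ker_mkQ, LinearMap.ker_comp, Submodule.ker_mkQ]
    _ ≤ Module.finrank ℂ ((Wfil θ (N * m)).map I.mkQ) := Submodule.finrank_mono hmap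
    _ ≤ C * (N * m + 1) ^ e := hC _
    _ ≤ C * ((N + 1) * (m + 1)) ^ e := by gcongr; nlinarith
    _ = C * (N + 1) ^ e * (m + 1) ^ e := by rw [mul_pow, mul_assoc]

end Growth

/-! ### Primitive elements of pre-Nichols algebras of finite GKdim -/

section Primitive

/-- The AAH conjecture for braidings of a fixed rank `θ`. -/
def AAHOfRank (θ : ℕ) : Prop :=
  ∀ (q : Fin θ → Fin θ → ℂˣ) (S : BraidedStr θ q), FinGK (Jq S) → FiniteRootSystem q

variable {θ : ℕ} {q : Fin θ → Fin θ → ℂˣ} {S : BraidedStr θ q} {I : Submodule ℂ (TV θ)}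

theorem homogD_le_homogTot (γ : Fin θ → ℕ) : homogD θ γ ≤ homogTot θ (∑ a, γ a) :=
  Submodule.span_mono fun _ ⟨w, hw, hx⟩ => ⟨w, by rw [length_eq_sum_degW, hw], hx⟩

theorem gen_mem_homogTot (a : Fin θ) : gen θ a ∈ homogTot θ 1 :=
  wordElem_singleton a ▸ wordElem_mem_wordSpan List.length_singleton

theorem gen_pow_mem_homogD (a : Fin θ) (n : ℕ) : gen θ a ^ n ∈ homogD θ (n • δ θ a) := by
  induction n with
  | zero => rw [pow_zero, zero_smul]; exact one_mem_homogD
  | succ n ih => rw [pow_succ, succ_nsmul]; exact mul_mem_homogD ih (gen_mem_homogD a)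

-- The double action of `δ t` scales `w` and `x_s ^ n` by different eigenvalues.
theorem notMem_sup_span_gen_pow (hI : IsPreNicholsIdeal S I) {γ : Fin θ → ℕ} {w : TV θ}
    (hw : w ∈ homogD θ γ) (hwI : w ∉ I) {n : ℕ} {s t : Fin θ}
    (hst : qf q (δ θ t) γ * qf q γ (δ θ t) ≠ qtil q s t ^ n) :
    w ∉ I ⊔ Submodule.span ℂ {gen θ s ^ n} := by
  intro h
  obtain ⟨r, hr, u, hu, hru⟩ := Submodule.mem_sup.1 h
  obtain ⟨c, rfl⟩ := Submodule.mem_span_singleton.1 hu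
  obtain rfl : r = w - c • gen θ s ^ n := eq_sub_of_add_eq hru
  have hpow := gen_pow_mem_homogD s n
  have hscaled : actL q (δ θ t) (actR q (δ θ t) (w - c • gen θ s ^ n)) -
      qtil q s t ^ n • (w - c • gen θ s ^ n) =
        (qf q (δ θ t) γ * qf q γ (δ θ t) - qtil q s t ^ n) • w := by
    simp only [map_sub, map_smul, actR_homog q hw, actR_homog q hpow, actL_homog q hw,
      actL_homog q hpow, qf_nsmul_left, qf_nsmul_right, qf_δ, qtil, mul_pow]
    module
  have hmem := I.sub_mem (hI.actL_mem (δ θ t) (hI.actR_mem (δ θ t) hr))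
    (I.smul_mem (qtil q s t ^ n) hr)
  rw [hscaled] at hmem
  exact hwI ((I.smul_mem_iff (sub_ne_zero.2 hst)).1 hmem)

theorem genLift_word_mem_homogTot {y : Fin 2 → TV θ} {n : ℕ} (h0 : y 0 ∈ homogTot θ 1)
    (h1 : y 1 ∈ homogTot θ n) (v : List (Fin 2)) :
    genLift y (wordElem 2 v) ∈ homogTot θ (v.count 0 + n * v.count 1) := by
  induction v with
  | nil => rw [wordElem_nil, map_one]; exact wordElem_mem_wordSpan (w := []) rfl
  | cons a v ih =>
    rw [wordElem_cons, map_mul, genLift_gen]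
    match a with
    | 0 =>
      refine mul_mem_wordSpan (fun v' w' hv hw => ?_) h0 ih
      simp only [List.length_append, hv, hw, List.count_cons]
      norm_num
      ring
    | 1 =>
      refine mul_mem_wordSpan (fun v' w' hv hw => ?_) h1 ih
      simp only [List.length_append, hv, hw, List.count_cons]
      norm_num
      ring

theorem eq_replicate_zero_of_count {n : ℕ} (hn : 2 ≤ n) {v : List (Fin 2)} (hv : v ≠ [1])
    (h : v.count 0 + n * v.count 1 = n) : v = List.replicate n 0 := by
  have hlen : v.length = v.count 0 + v.count 1 := by
    rw [length_eq_sum_degW, Fin.sum_univ_two]; rfl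
  obtain h1 | h1 | h1 : v.count 1 = 0 ∨ v.count 1 = 1 ∨ 2 ≤ v.count 1 := by omega
  · refine List.eq_replicate_iff.2 ⟨by rw [hlen, ← h, h1, mul_zero], fun b hb => ?_⟩
    have : b ≠ 1 := by rintro rfl; exact List.count_eq_zero.1 h1 hb
    omega
  · rw [h1, mul_one, Nat.add_eq_right] at h
    obtain ⟨a, rfl⟩ := List.length_eq_one_iff.1 (by omega : v.length = 1)
    refine absurd ?_ (List.count_eq_zero.1 h)
    rw [List.mem_singleton]
    have : a ≠ 1 := by rintro rfl; exact hv rfl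
    omega
  · nlinarith

theorem exists_form_genLift_eq_coeff (hI : IsPreNicholsIdeal S I) {w : TV θ} {n : ℕ} (hn : 2 ≤ n)
    (hw : w ∈ homogTot θ n) {s : Fin θ} (hsup : w ∉ I ⊔ Submodule.span ℂ {gen θ s ^ n}) :
    ∃ f : TV θ →ₗ[ℂ] ℂ, (∀ x ∈ I, f x = 0) ∧
      ∀ x, f (genLift ![gen θ s, w] x) = coeff [1] x := by
  obtain ⟨f, hfw, hf⟩ := Submodule.exists_dual_map_eq_bot_of_notMem hsup inferInstance
  replace hf (x) (hx : x ∈ I ⊔ Submodule.span ℂ {gen θ s ^ n}) : f x = 0 :=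
    (Submodule.mem_bot ℂ).1 (hf ▸ Submodule.mem_map_of_mem hx)
  refine ⟨(f w)⁻¹ • f ∘ₗ lenProj θ n, fun x hx => ?_, LinearMap.congr_fun (f :=
    ((f w)⁻¹ • f ∘ₗ lenProj θ n) ∘ₗ (genLift ![gen θ s, w]).toLinearMap) (word_ext fun v => ?_)⟩
  · simp [hf _ (Submodule.mem_sup_left (hI.lenProj_mem n hx))]
  have hmem := genLift_word_mem_homogTot (y := ![gen θ s, w]) (gen_mem_homogTot s) hw v
  simp only [LinearMap.comp_apply, LinearMap.smul_apply, AlgHom.toLinearMap_apply, coeff_word]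
  by_cases hv : v = [1]
  · subst hv
    simp [wordElem_singleton, genLift_gen, wordProj_of_mem _ hw, hfw]
  rw [if_neg hv]
  by_cases hlen : v.count 0 + n * v.count 1 = n
  · have hpow : genLift ![gen θ s, w] (wordElem 2 v) = gen θ s ^ n := by
      rw [eq_replicate_zero_of_count hn hv hlen, wordElem, List.map_replicate,
        List.prod_replicate, map_pow, genLift_gen, Matrix.cons_val_zero]
    rw [hlen] at hmem
    rw [wordProj_of_mem _ hmem, hpow,
      hf _ (Submodule.mem_sup_right (Submodule.mem_span_singleton_self _)), smul_zero]
  · rw [wordProj_eq_zero _ (fun u hu => hu.trans_ne hlen) hmem, map_zero, smul_zero]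

theorem mem_of_isPrimitiveMod (hAAH : AAHOfRank 2) (hI : IsPreNicholsIdeal S I) (hGK : FinGK I)
    {γ : Fin θ → ℕ} (hγ : 2 ≤ ∑ a, γ a) {w : TV θ} (hw : w ∈ homogD θ γ)
    (hprim : IsPrimitiveMod S I w) {s t : Fin θ}
    (hst : qf q (δ θ t) γ * qf q γ (δ θ t) ≠ qtil q s t ^ ∑ a, γ a) {q' : Fin 2 → Fin 2 → ℂˣ}
    (hq' : ∀ b c, (q' b c : ℂ) = qf q (![δ θ s, γ] b) (![δ θ s, γ] c))
    (hinf : ¬ FiniteRootSystem q') : w ∈ I := by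
  by_contra hwI
  have hwn := homogD_le_homogTot γ hw
  have hw0 : coeff [] w = 0 := coeff_eq_zero_of_mem_wordSpan (by simp; omega) hwn
  have hws : coeff [s] w = 0 := coeff_eq_zero_of_mem_wordSpan (by simp; omega) hwn
  have hy0 : ∀ b, coeff [] (![gen θ s, w] b) = 0 := Fin.forall_fin_two.2 ⟨coeff_nil_gen s, hw0⟩
  have hle : I.comap (genLift ![gen θ s, w]).toLinearMap ≤ derKer q' := by
    refine comap_genLift_le_derKer (d := ![δ θ s, γ]) hI
      (Fin.forall_fin_two.2 ⟨gen_mem_homogD s, hw⟩) hq' (Fin.forall_fin_two.2 ⟨?_, hprim⟩) hy0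
      (Fin.forall_fin_two.2 ⟨⟨coeff [s], fun x => hI.coeff_eq_zero (by simp), fun x => ?_⟩,
        exists_form_genLift_eq_coeff hI hγ hwn (notMem_sup_span_gen_pow hI hw hwI hst)⟩)
    · simp [IsPrimitiveMod, S.Δ_gen]
    · simp [coeff_singleton_genLift hy0, coeff_singleton_gen, hws]
  refine hinf (hAAH q' (braidedStr q') (FinGK_of_comap_genLift_le (N := ∑ a, γ a)
    (Fin.forall_fin_two.2 ⟨?_, homogTot_le_Wfil _ hwn⟩) (hle.trans (derKer_le_Jq _)) hGK))
  exact Wfil_mono (by omega) (homogTot_le_Wfil 1 (gen_mem_homogTot s))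

end Primitive

section Degree

variable {θ : ℕ} {q : Fin θ → Fin θ → ℂˣ} {S : BraidedStr θ q} {I : Submodule ℂ (TV θ)}

theorem coprod_word_mem (S : BraidedStr θ q) (w : List (Fin θ)) :
    S.Δ (wordElem θ w) ∈ Submodule.span ℂ {z | ∃ u v : List (Fin θ),
      degW θ u + degW θ v = degW θ w ∧ z = wordElem θ u ⊗ₜ[ℂ] wordElem θ v} := by
  induction w with
  | nil =>
    rw [wordElem_nil, S.Δ_one]
    exact Submodule.subset_span ⟨[], [], by simp [degW_nil], by rw [wordElem_nil]⟩
  | cons a w ih =>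
    rw [wordElem_cons, coprod_gen_mul]
    refine (Submodule.map_span_le (primMul q (δ θ a) (gen θ a)) _ _).2 ?_
      (Submodule.mem_map_of_mem ih)
    rintro _ ⟨u, v, huv, rfl⟩
    rw [primMul_tmul, actL_word, ← TensorProduct.smul_tmul', ← wordElem_cons, ← wordElem_cons]
    refine Submodule.add_mem _ (Submodule.subset_span ⟨a :: u, v, ?_, rfl⟩)
      (Submodule.smul_mem _ _ (Submodule.subset_span ⟨u, a :: v, ?_, rfl⟩))
    · rw [degW_cons, degW_cons, ← huv, add_assoc]
    · rw [degW_cons, degW_cons, ← huv, add_left_comm]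

theorem coprod_eq_sum_degProj (S : BraidedStr θ q) {γ : Fin θ → ℕ} {x : TV θ}
    (hx : x ∈ homogD θ γ) :
    S.Δ x = ∑ d ∈ Finset.Icc 0 γ, TensorProduct.map (degProj d) (degProj (γ - d)) (S.Δ x) := by
  rw [← LinearMap.sum_apply]
  refine map_eq_of_mem_wordSpan (F := S.Δ) (G := (∑ d ∈ Finset.Icc 0 γ,
    TensorProduct.map (degProj d) (degProj (γ - d))) ∘ₗ S.Δ) (fun w hw => ?_) hx
  refine LinearMap.eqOn_span (f := LinearMap.id) ?_ (hw ▸ coprod_word_mem S w)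
  rintro _ ⟨u, v, huv, rfl⟩
  rw [LinearMap.id_apply, LinearMap.sum_apply, Finset.sum_eq_single (degW θ u)]
  · rw [← huv, add_tsub_cancel_left, TensorProduct.map_tmul, wordProj_word, wordProj_word,
      if_pos rfl, if_pos rfl]
  · intro d _ hd
    rw [TensorProduct.map_tmul, wordProj_word, if_neg hd.symm, TensorProduct.zero_tmul]
  · intro h
    exact absurd (Finset.mem_Icc.2 ⟨zero_le, huv ▸ le_self_add⟩) h

theorem map_degProj_zero_right (d : Fin θ → ℕ) (z : TV θ ⊗[ℂ] TV θ) :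
    TensorProduct.map (degProj d) (degProj 0) z = degProj d (sliceR (coeff []) z) ⊗ₜ 1 := by
  induction z using TensorProduct.induction_on with
  | zero => simp
  | add u v hu hv => simp only [map_add, TensorProduct.add_tmul, hu, hv]
  | tmul u v => simp [degProj_zero, sliceR_tmul, TensorProduct.smul_tmul]

theorem map_degProj_zero_left (d : Fin θ → ℕ) (z : TV θ ⊗[ℂ] TV θ) :
    TensorProduct.map (degProj 0) (degProj d) z = 1 ⊗ₜ degProj d (sliceL (coeff []) z) := by
  induction z using TensorProduct.induction_on with
  | zero => simp
  | add u v hu hv => simp only [map_add, TensorProduct.tmul_add, hu, hv]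
  | tmul u v => simp [degProj_zero, sliceL_tmul, TensorProduct.smul_tmul]

theorem map_degProj_coprod_mem {γ d : Fin θ → ℕ} (hdγ : d ≤ γ) (hd0 : d ≠ 0) (hdne : d ≠ γ)
    (hlow : ∀ e < γ, derKer q ⊓ homogD θ e ≤ I) {w : TV θ} (hwN : w ∈ derKer q) :
    TensorProduct.map (degProj d) (degProj (γ - d)) (S.Δ w) ∈ mixedSub I := by
  have hsub : γ - d < γ := by
    refine lt_of_le_of_ne tsub_le_self fun h => hd0 (funext fun a => ?_)
    have h1 : γ a - d a = γ a := congrFun h a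
    have h2 : d a ≤ γ a := hdγ a
    change d a = 0
    omega
  refine mixedSub_le (M := (mixedSub I).comap (TensorProduct.map (degProj d) (degProj (γ - d))))
    (fun a b ha => ?_) (fun a b hb => ?_) (coprod_mem_mixedSub_derKer S hwN)
  · exact tmul_mem_mixedSub_left (hlow d (hdγ.lt_of_ne hdne)
      ⟨degProj_mem_derKer d ha, wordProj_mem _ a⟩) _
  · exact tmul_mem_mixedSub_right _ (hlow _ hsub ⟨degProj_mem_derKer _ hb, wordProj_mem _ b⟩)

theorem isPrimitiveMod_of_mem_derKer {γ : Fin θ → ℕ} (hγ : γ ≠ 0)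
    (hlow : ∀ d < γ, derKer q ⊓ homogD θ d ≤ I) {w : TV θ} (hw : w ∈ homogD θ γ)
    (hwN : w ∈ derKer q) : IsPrimitiveMod S I w := by
  have hsub : ({0, γ} : Finset (Fin θ → ℕ)) ⊆ Finset.Icc 0 γ := by
    simp [Finset.insert_subset_iff]
  have hsum := coprod_eq_sum_degProj S hw
  rw [← Finset.sum_sdiff hsub, Finset.sum_pair hγ.symm, tsub_self, tsub_zero,
    map_degProj_zero_right, map_degProj_zero_left, counit_right, counit_left,
    wordProj_of_mem _ hw] at hsum
  rw [IsPrimitiveMod, hsum, add_comm (w ⊗ₜ[ℂ] (1 : TV θ)), add_sub_cancel_right]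
  refine Submodule.sum_mem _ fun d hd => ?_
  simp only [Finset.mem_sdiff, Finset.mem_Icc, Finset.mem_insert, Finset.mem_singleton,
    not_or] at hd
  exact map_degProj_coprod_mem hd.1.2 hd.2.1 hd.2.2 hlow hwN

theorem eq_zero_of_mem_derKer {γ : Fin θ → ℕ} (hγ : ∑ a, γ a < 2) {w : TV θ}
    (hw : w ∈ homogD θ γ) (hwN : w ∈ derKer q) : w = 0 := by
  rw [← wordProj_of_mem _ (homogD_le_homogTot γ hw), lenProj_eq_zero_of_mem_derKer hγ hwN]

end Degree

/-! ### Degrees below `5α_i + 3α_j + α_k` -/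

section Diagram

/-- The Dynkin diagram of the theorem: `i` and `j`, and `j` and `k`, are linked by `z⁻¹`, where
`z = q_{kk}` is a primitive ninth root of unity, and the vertices carry `z⁶`, `z`, `z`. -/
structure IsDiagram {θ : ℕ} (q : Fin θ → Fin θ → ℂˣ) (i j k : Fin θ) : Prop where
  prim : IsPrimitiveRoot (q k k : ℂ) 9
  self_j : (q j j : ℂ) = (q k k : ℂ)
  link_ij : (qtil q i j)⁻¹ = (q k k : ℂ)
  link_jk : (qtil q j k)⁻¹ = (q k k : ℂ)
  link_ik : qtil q i k = 1
  self_i : (q i i : ℂ) = (q k k : ℂ) ^ 6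

/-- The exponents modulo `9` of `q̃_{st}`, with `q̃_{ss} = q_{ss}²`, in the basis `(i, j, k)`. -/
def pairExp : Fin 3 → Fin 3 → ℤ := ![![12, -1, 0], ![-1, 2, -1], ![0, -1, 2]]

/-- The exponents of the vertex labels `q_{ii}`, `q_{jj}`, `q_{kk}`. -/
def vertexExp : Fin 3 → ℤ := ![6, 1, 1]

/-- The exponent of `q(γ, α_t) q(α_t, γ)` for `γ = a α_i + b α_j + c α_k`. -/
def linkExp (a b c : ℕ) (t : Fin 3) : ℤ := a * pairExp t 0 + b * pairExp t 1 + c * pairExp t 2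

/-- The exponent of `q(γ, γ)` for `γ = a α_i + b α_j + c α_k`. -/
def selfExp (a b c : ℕ) : ℤ := 6 * a ^ 2 + b ^ 2 + c ^ 2 - a * b - b * c

theorem exists_infiniteCheck (a : Fin 6) (b : Fin 4) (c : Fin 2)
    (h : 2 ≤ (a : ℕ) + b + c) : ∃ s t,
      linkExp a b c t % 9 ≠ ((a : ℕ) + b + c : ℕ) * pairExp s t % 9 ∧
      ∃ AB ∈ [(2, 2), (1, 4)],
        let x : DiagramExp := ⟨vertexExp s, linkExp a b c s % 9, selfExp a b c % 9⟩
        DiagramExp.infiniteCheck 9 (AB.1, AB.2, x) 40 (AB.1, AB.2, x) = true := by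
  decide +revert +kernel

variable {θ : ℕ} {q : Fin θ → Fin θ → ℂˣ} {i j k : Fin θ}

theorem IsDiagram.zpow_eq_one_iff (h : IsDiagram q i j k) (n : ℤ) :
    (q k k : ℂ) ^ n = 1 ↔ 9 ∣ n := by
  exact_mod_cast h.prim.zpow_eq_one_iff_dvd n

theorem IsDiagram.ne_self_i (h : IsDiagram q i j k) : (q k k : ℂ) ≠ q i i := by
  rw [h.self_i]
  intro hz
  have := h.prim.pow_inj (by norm_num) (by norm_num) ((pow_one _).trans hz)
  omega

theorem IsDiagram.ij (h : IsDiagram q i j k) : i ≠ j := by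
  rintro rfl
  exact h.ne_self_i h.self_j.symm

theorem IsDiagram.ik (h : IsDiagram q i j k) : i ≠ k := by
  rintro rfl
  exact h.ne_self_i rfl

theorem IsDiagram.jk (h : IsDiagram q i j k) : j ≠ k := by
  rintro rfl
  have h3 : (q j j : ℂ) ^ (3 : ℤ) = 1 := by
    have := h.link_jk
    rw [qtil] at this
    field_simp at this
    exact_mod_cast this.symm
  exact absurd ((h.zpow_eq_one_iff 3).1 h3) (by norm_num)

theorem IsDiagram.qtil_eq (h : IsDiagram q i j k) (s t : Fin 3) :
    qtil q (![i, j, k] s) (![i, j, k] t) = (q k k : ℂ) ^ pairExp s t := by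
  have hij := inv_eq_iff_eq_inv.1 h.link_ij
  have hjk := inv_eq_iff_eq_inv.1 h.link_jk
  have hik := h.link_ik
  have h12 : ((q k k : ℂ) ^ 6) * (q k k : ℂ) ^ 6 = (q k k : ℂ) ^ (12 : ℤ) := by
    rw [← pow_add]; norm_cast
  rw [qtil] at hij hjk hik
  fin_cases s <;> fin_cases t <;> simp [qtil, pairExp, h.self_i, h.self_j, hij, hjk, hik, h12,
    ← zpow_two, mul_comm (q j i : ℂ), mul_comm (q k j : ℂ), mul_comm (q k i : ℂ)]

theorem IsDiagram.vertex_eq (h : IsDiagram q i j k) (s : Fin 3) :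
    (q (![i, j, k] s) (![i, j, k] s) : ℂ) = (q k k : ℂ) ^ vertexExp s := by
  fin_cases s <;> simp [vertexExp, h.self_i, h.self_j, zpow_ofNat]

theorem IsDiagram.link_eq (h : IsDiagram q i j k) (a b c : ℕ) (t : Fin 3) :
    qf q (δ θ (![i, j, k] t)) (a • δ θ i + b • δ θ j + c • δ θ k) *
      qf q (a • δ θ i + b • δ θ j + c • δ θ k) (δ θ (![i, j, k] t)) =
      (q k k : ℂ) ^ linkExp a b c t := by
  have h0 : qtil q (![i, j, k] t) i = _ := h.qtil_eq t 0
  have h1 : qtil q (![i, j, k] t) j = _ := h.qtil_eq t 1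
  have h2 : qtil q (![i, j, k] t) k = _ := h.qtil_eq t 2
  generalize ![i, j, k] t = T at *
  have hz : (q k k : ℂ) ≠ 0 := Units.ne_zero _
  calc _ = qtil q T i ^ a * qtil q T j ^ b * qtil q T k ^ c := by
        simp only [qf_add_left, qf_add_right, qf_nsmul_left, qf_nsmul_right, qf_δ, qtil]
        ring
    _ = (q k k : ℂ) ^ linkExp a b c t := by
        simp only [h0, h1, h2, linkExp, zpow_add₀ hz, mul_comm (Nat.cast _ : ℤ), zpow_mul,
          zpow_natCast]

theorem IsDiagram.self_eq (h : IsDiagram q i j k) (a b c : ℕ) :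
    qf q (a • δ θ i + b • δ θ j + c • δ θ k) (a • δ θ i + b • δ θ j + c • δ θ k) =
      (q k k : ℂ) ^ selfExp a b c := by
  have hz : (q k k : ℂ) ≠ 0 := Units.ne_zero _
  have hij := inv_eq_iff_eq_inv.1 h.link_ij
  have hjk := inv_eq_iff_eq_inv.1 h.link_jk
  calc _ = (q i i : ℂ) ^ (a ^ 2) * (q j j : ℂ) ^ (b ^ 2) * (q k k : ℂ) ^ (c ^ 2) *
        qtil q i j ^ (a * b) * qtil q j k ^ (b * c) * qtil q i k ^ (a * c) := by
        simp only [qf_add_left, qf_add_right, qf_nsmul_left, qf_nsmul_right, qf_δ, qtil]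
        ring
    _ = (q k k : ℂ) ^ selfExp a b c := by
        rw [h.self_i, h.self_j, hij, hjk, h.link_ik, one_pow, mul_one, selfExp, zpow_sub₀ hz,
          zpow_sub₀ hz, zpow_add₀ hz, zpow_add₀ hz, inv_pow, inv_pow, ← pow_mul]
        norm_cast

theorem IsDiagram.zpow_emod (h : IsDiagram q i j k) (n : ℤ) : q k k ^ (n % 9) = q k k ^ n := by
  have hord : orderOf (q k k) = 9 := (IsPrimitiveRoot.coe_units_iff.1 h.prim).eq_orderOf.symm
  simpa [hord] using zpow_mod_orderOf (q k k) n

theorem eq_sum_of_le_sum {γ : Fin θ → ℕ} (hij : i ≠ j) (hik : i ≠ k) (hjk : j ≠ k)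
    {a b c : ℕ} (hγ : γ ≤ a • δ θ i + b • δ θ j + c • δ θ k) :
    γ = γ i • δ θ i + γ j • δ θ j + γ k • δ θ k := by
  ext t
  have ht := hγ t
  simp only [δ, Pi.add_apply, Pi.smul_apply, smul_eq_mul] at ht ⊢
  by_cases hti : t = i
  · simp [hti, hij, hik]
  by_cases htj : t = j
  · simp [htj, hij.symm, hjk]
  by_cases htk : t = k
  · simp [htk, hik.symm, hjk.symm]
  simpa [hti, htj, htk] using ht

theorem IsDiagram.exists_infinite_extension (h : IsDiagram q i j k) {γ : Fin θ → ℕ}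
    (hγ : γ ≤ 5 • δ θ i + 3 • δ θ j + 1 • δ θ k) (h2 : 2 ≤ ∑ a, γ a) :
    ∃ s t, qf q (δ θ t) γ * qf q γ (δ θ t) ≠ qtil q s t ^ ∑ a, γ a ∧
      ∀ q' : Fin 2 → Fin 2 → ℂˣ,
        (∀ b c, (q' b c : ℂ) = qf q (![δ θ s, γ] b) (![δ θ s, γ] c)) →
          ¬ FiniteRootSystem q' := by
  have hγeq := eq_sum_of_le_sum h.ij h.ik h.jk hγ
  have hi : γ i < 6 := Nat.lt_succ_of_le <| by simpa [δ, h.ij, h.ik] using hγ i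
  have hj : γ j < 4 := Nat.lt_succ_of_le <| by simpa [δ, h.ij.symm, h.jk] using hγ j
  have hk : γ k < 2 := Nat.lt_succ_of_le <| by simpa [δ, h.ik.symm, h.jk.symm] using hγ k
  have hsum : ∑ a, γ a = γ i + γ j + γ k := by
    conv_lhs => rw [hγeq]
    simp [δ, Finset.sum_add_distrib]
  have hlink := h.link_eq (γ i) (γ j) (γ k)
  have hself := h.self_eq (γ i) (γ j) (γ k)
  rw [← hγeq] at hlink hself
  obtain ⟨s, t, hst, ⟨A, B⟩, hAB, hinf⟩ :=
    exists_infiniteCheck ⟨γ i, hi⟩ ⟨γ j, hj⟩ ⟨γ k, hk⟩ (hsum ▸ h2)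
  refine ⟨![i, j, k] s, ![i, j, k] t, fun heq => hst ?_, fun q' hq' => ?_⟩
  · rw [hlink, h.qtil_eq, ← zpow_natCast, ← zpow_mul, mul_comm, ← div_eq_one_iff_eq
      (zpow_ne_zero _ (Units.ne_zero _)), ← zpow_sub₀ (Units.ne_zero _), h.zpow_eq_one_iff,
      hsum] at heq
    exact (Int.modEq_iff_dvd.2 heq).symm
  · refine not_finiteRootSystem_of_infiniteCheck (IsPrimitiveRoot.coe_units_iff.1 h.prim)
      zero_ne_one ⟨Units.ext ?_, Units.ext ?_, Units.ext ?_⟩ ?_ hinf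
    · rw [hq', Units.val_zpow_eq_zpow_val, ← h.vertex_eq]
      exact qf_δ q _ _
    · rw [Units.val_mul, hq', hq', h.zpow_emod, Units.val_zpow_eq_zpow_val]
      exact hlink s
    · rw [hq', h.zpow_emod, Units.val_zpow_eq_zpow_val]
      exact hself
    · exact (by decide : ∀ AB ∈ [(2, 2), (1, 4)], 4 ≤ AB.1 * AB.2) _ hAB

theorem derKer_inf_homogD_le {S : BraidedStr θ q} {I : Submodule ℂ (TV θ)}
    (h : IsDiagram q i j k) (hAAH : AAHOfRank 2) (hI : IsPreNicholsIdeal S I) (hGK : FinGK I)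
    {γ : Fin θ → ℕ} (hγ : γ ≤ 5 • δ θ i + 3 • δ θ j + 1 • δ θ k) :
    derKer q ⊓ homogD θ γ ≤ I := by
  induction γ using WellFoundedLT.induction with
  | ind γ ih =>
    rintro w ⟨hwN, hw⟩
    obtain hlt | hge := lt_or_ge (∑ a, γ a) 2
    · rw [eq_zero_of_mem_derKer hlt hw hwN]
      exact I.zero_mem
    have hγ0 : γ ≠ 0 := by rintro rfl; simp at hge
    have hprim : IsPrimitiveMod S I w :=
      isPrimitiveMod_of_mem_derKer hγ0 (fun d hd => ih d hd (hd.le.trans hγ)) hw hwN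
    obtain ⟨s, t, hst, hinf⟩ := h.exists_infinite_extension hγ hge
    exact mem_of_isPrimitiveMod hAAH hI hGK hge hw hprim hst
      (q' := fun b c => Units.mk0 _ (qf_ne_zero q (![δ θ s, γ] b) (![δ θ s, γ] c)))
      (fun b c => rfl) (hinf _ fun b c => rfl)

end Diagram

/-! ### The relation -/

section Bracket

variable {θ : ℕ} {q : Fin θ → Fin θ → ℂˣ} {d e f : Fin θ → ℕ} {x y z : TV θ} {b : Fin θ}

theorem brk_mul_left (d e f : Fin θ → ℕ) (x y z : TV θ) :
    brk q (d + e) f (x * y) z = x * brk q e f y z + qf q e f • (brk q d f x z * y) := by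
  simp only [brk, qf_add_left, mul_sub, sub_mul, mul_smul_comm, smul_mul_assoc, mul_assoc]
  module

theorem brk_mul_right (d e f : Fin θ → ℕ) (x y z : TV θ) :
    brk q d (e + f) x (y * z) = brk q d e x y * z + qf q d e • (y * brk q d f x z) := by
  simp only [brk, qf_add_right, mul_sub, sub_mul, mul_smul_comm, smul_mul_assoc, mul_assoc]
  module

theorem brk_smul_left (c : ℂ) (d e : Fin θ → ℕ) (x y : TV θ) :
    brk q d e (c • x) y = c • brk q d e x y := by
  simp only [brk, mul_smul_comm, smul_mul_assoc, smul_sub, smul_comm c]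

theorem brk_smul_right (c : ℂ) (d e : Fin θ → ℕ) (x y : TV θ) :
    brk q d e x (c • y) = c • brk q d e x y := by
  simp only [brk, mul_smul_comm, smul_mul_assoc, smul_sub, smul_comm c]

theorem brk_mul_self_mem_derKer (h : brk q d f x z ∈ derKer q) :
    brk q (d + d) f (x * x) z ∈ derKer q := by
  rw [brk_mul_left]
  exact Submodule.add_mem _ (mul_mem_derKer_left x h)
    (Submodule.smul_mem _ _ (mul_mem_derKer_right x h))

theorem brk_brk_mem_derKer (hy : brk q d e x y ∈ derKer q) (hz : brk q d f x z ∈ derKer q) :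
    brk q d (e + f) x (brk q e f y z) ∈ derKer q := by
  have : brk q d (e + f) x (brk q e f y z) =
      brk q d (e + f) x (y * z) - qf q e f • brk q d (f + e) x (z * y) := by
    simp only [brk, add_comm f e, mul_sub, sub_mul, mul_smul_comm, smul_mul_assoc]
    module
  rw [this, brk_mul_right, brk_mul_right]
  exact Submodule.sub_mem _
    (Submodule.add_mem _ (mul_mem_derKer_right z hy)
      (Submodule.smul_mem _ _ (mul_mem_derKer_left y hz)))
    (Submodule.smul_mem _ _ (Submodule.add_mem _ (mul_mem_derKer_right y hz)
      (Submodule.smul_mem _ _ (mul_mem_derKer_left z hy))))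

theorem skewDer_brk (b : Fin θ) (hx : x ∈ homogD θ d) (hy : y ∈ homogD θ e) :
    skewDer q b (brk q d e x y) =
      x * skewDer q b y + qf q (δ θ b) e • (skewDer q b x * y) -
        qf q d e • (y * skewDer q b x + qf q (δ θ b) d • (skewDer q b y * x)) := by
  rw [brk, map_sub, map_smul, skewDer_mul, skewDer_mul, actL_homog q hx, actL_homog q hy,
    mul_smul_comm, mul_smul_comm]

theorem skewDer_brk_of_right_eq_zero (hx : x ∈ homogD θ (d + δ θ b)) (hy : y ∈ homogD θ e)
    (h : skewDer q b y = 0) :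
    skewDer q b (brk q (d + δ θ b) e x y) = qf q (δ θ b) e • brk q d e (skewDer q b x) y := by
  rw [skewDer_brk b hx hy, h, brk, qf_add_left]
  simp only [mul_zero, zero_mul, smul_zero, add_zero, zero_add]
  module

theorem skewDer_brk_of_left_eq_zero (hx : x ∈ homogD θ d) (hy : y ∈ homogD θ e)
    (h : skewDer q b x = 0) :
    skewDer q b (brk q d e x y) =
      x * skewDer q b y - (qf q d e * qf q (δ θ b) d) • (skewDer q b y * x) := by
  rw [skewDer_brk b hx hy, h, mul_smul]
  simp only [mul_zero, zero_mul, smul_zero, add_zero, zero_add]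

end Bracket

section IteratedAdjoint

variable {θ : ℕ} {q : Fin θ → Fin θ → ℂˣ}

variable (q) in
/-- The braided commutator `[x_v, x_w]_c` of the iterated braided adjoints attached to two
words. -/
def xwBrk (v w : List (Fin θ)) : TV θ := brk q (degW θ v) (degW θ w) (xw q v) (xw q w)

theorem degW_singleton (a : Fin θ) : degW θ [a] = δ θ a := by
  rw [degW_cons, degW_nil, add_zero]

theorem xw_cons (a : Fin θ) {w : List (Fin θ)} (hw : w ≠ []) :
    xw q (a :: w) = xwBrk q [a] w := by
  obtain ⟨c, w, rfl⟩ := List.exists_cons_of_ne_nil hw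
  rw [xwBrk, degW_singleton]
  rfl

theorem gen_mul_xw (a : Fin θ) {w : List (Fin θ)} (hw : w ≠ []) :
    gen θ a * xw q w =
      xw q (a :: w) + qf q (δ θ a) (degW θ w) • (xw q w * gen θ a) := by
  rw [xw_cons a hw, xwBrk, brk, degW_singleton, xw, sub_add_cancel]

theorem gen_mul_gen_mul_xw (a : Fin θ) {w : List (Fin θ)} (hw : w ≠ []) :
    gen θ a * gen θ a * xw q w = xw q (a :: a :: w) +
      (qf q (δ θ a) (degW θ (a :: w)) + qf q (δ θ a) (degW θ w)) • (xw q (a :: w) * gen θ a) +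
      qf q (δ θ a) (degW θ w) ^ 2 • (xw q w * (gen θ a * gen θ a)) := by
  rw [mul_assoc, gen_mul_xw a hw, mul_add, gen_mul_xw a (List.cons_ne_nil a w), mul_smul_comm,
    ← mul_assoc, gen_mul_xw a hw, add_mul, smul_mul_assoc, mul_assoc (xw q w)]
  module

variable (q) in
theorem xw_mem_homogD : ∀ w, xw q w ∈ homogD θ (degW θ w)
  | [] => degW_nil (θ := θ) ▸ one_mem_homogD
  | [a] => degW_singleton a ▸ gen_mem_homogD a
  | a :: c :: w => by
    rw [degW_cons]
    exact brk_mem_homogD q (gen_mem_homogD a) (xw_mem_homogD (c :: w)) _ _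

variable (q) in
theorem xwBrk_mem_homogD (v w : List (Fin θ)) : xwBrk q v w ∈ homogD θ (degW θ (v ++ w)) := by
  rw [degW_append]
  exact brk_mem_homogD q (xw_mem_homogD q v) (xw_mem_homogD q w) _ _

theorem mem_derKer_of_skewDer_mem {d : Fin θ → ℕ} {x : TV θ} (hx : x ∈ homogD θ d) {a : Fin θ}
    (ha : d a ≠ 0) (h : ∀ b, skewDer q b x ∈ derKer q) : x ∈ derKer q := by
  refine mem_derKer_iff_skewDer.2 ⟨coeff_eq_zero_of_mem_wordSpan (fun h0 => ha ?_) hx, h⟩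
  rw [← h0, degW_nil, Pi.zero_apply]

theorem skewDer_xw_singleton_of_ne {a b : Fin θ} (hab : a ≠ b) : skewDer q b (xw q [a]) = 0 :=
  (skewDer_gen q a b).trans (if_neg hab)

theorem skewDer_xw_append_of_ne {a b : Fin θ} (hab : a ≠ b) :
    ∀ w, skewDer q b (xw q (w ++ [a])) = 0
  | [] => skewDer_xw_singleton_of_ne hab
  | c :: w => by
    rw [List.cons_append, xw_cons c (by simp), xwBrk,
      skewDer_brk b (xw_mem_homogD q _) (xw_mem_homogD q _), skewDer_xw_append_of_ne hab w, xw,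
      skewDer_gen, degW_singleton]
    split_ifs with hcb
    · rw [hcb]; simp
    · simp

theorem skewDer_xw_append_pair {a b : Fin θ} (hab : a ≠ b) :
    ∀ w : List (Fin θ), (∀ c ∈ w, c ≠ b ∧ qtil q c b = 1) →
      skewDer q b (xw q (w ++ [a, b])) = (1 - qtil q a b) • xw q (w ++ [a])
  | [], _ => by
    rw [List.nil_append, xw_cons a (by simp), xwBrk,
      skewDer_brk_of_left_eq_zero (xw_mem_homogD q _) (xw_mem_homogD q _)
        (skewDer_xw_singleton_of_ne hab), degW_singleton, degW_singleton, qf_δ, qf_δ, xw,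
      xw, skewDer_gen, if_pos rfl, qtil, mul_one, one_mul, sub_smul, one_smul]
    rfl
  | c :: w, h => by
    obtain ⟨⟨hcb, hc⟩, hw⟩ := List.forall_mem_cons.1 h
    have hdeg : degW θ (w ++ [a, b]) = degW θ (w ++ [a]) + δ θ b := by
      simp only [degW_append, degW_cons, degW_nil, add_zero, add_assoc]
    have hqf : qf q (degW θ [c]) (degW θ (w ++ [a, b])) * qf q (δ θ b) (degW θ [c]) =
        qf q (degW θ [c]) (degW θ (w ++ [a])) := by
      rw [hdeg, degW_singleton, qf_add_right, qf_δ, qf_δ, mul_assoc, ← qtil, hc, mul_one]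
    rw [List.cons_append, xw_cons c (by simp), xwBrk,
      skewDer_brk_of_left_eq_zero (xw_mem_homogD q _) (xw_mem_homogD q _)
        (skewDer_xw_singleton_of_ne hcb), hqf, skewDer_xw_append_pair hab w hw, ← brk,
      brk_smul_right, List.cons_append, xw_cons c (w := w ++ [a]) (by simp), xwBrk]

theorem skewDer_xw_append_pair_self {a b : Fin θ} (hab : a ≠ b) :
    skewDer q b (xw q [a, a, b]) =
      ((1 - qtil q a b) * (1 - q a a * qtil q a b)) • (gen θ a * gen θ a) := by
  have hB : skewDer q b (xw q [a, b]) = (1 - qtil q a b) • gen θ a :=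
    skewDer_xw_append_pair hab [] (by simp)
  rw [xw_cons a (by simp), xwBrk,
    skewDer_brk_of_left_eq_zero (xw_mem_homogD q _) (xw_mem_homogD q _)
      (skewDer_xw_singleton_of_ne hab), hB, xw, degW_singleton, degW_cons, degW_singleton,
    qf_add_right, qf_δ, qf_δ, qf_δ, mul_assoc (q a a : ℂ), ← qtil, mul_smul_comm, smul_mul_assoc]
  module

theorem skewDer_gen_pow (a : Fin θ) (n : ℕ) :
    skewDer q a (gen θ a ^ (n + 1)) = qnum (q a a) (n + 1) • gen θ a ^ n := by
  induction n with
  | zero => simp [skewDer_gen, qnum]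
  | succ n ih =>
    rw [pow_succ', skewDer_mul, ih, skewDer_gen, if_pos rfl, one_mul, mul_smul_comm, ← pow_succ',
      actL_homog q (gen_pow_mem_homogD a (n + 1)), qf_nsmul_right, qf_δ, ← add_smul, qnum, qnum,
      ← Finset.sum_range_succ]

theorem skewDer_gen_pow_of_ne {a b : Fin θ} (hab : a ≠ b) (n : ℕ) :
    skewDer q b (gen θ a ^ n) = 0 := by
  induction n with
  | zero => rw [pow_zero, skewDer_one]
  | succ n ih => rw [pow_succ', skewDer_gen_mul, ih, if_neg hab, mul_zero, add_zero]

theorem gen_pow_mem_derKer {a : Fin θ} {n : ℕ} (h : qnum (q a a) (n + 1) = 0) :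
    gen θ a ^ (n + 1) ∈ derKer q := by
  refine mem_derKer_of_skewDer_mem (gen_pow_mem_homogD a (n + 1)) (a := a) (by simp [δ])
    fun b => ?_
  rcases eq_or_ne a b with rfl | hab
  · rw [skewDer_gen_pow, h, zero_smul]
    exact Submodule.zero_mem _
  · rw [skewDer_gen_pow_of_ne hab]
    exact Submodule.zero_mem _

end IteratedAdjoint

namespace IsDiagram

variable {θ : ℕ} {q : Fin θ → Fin θ → ℂˣ} {i j k : Fin θ}

theorem qnum_self_i (h : IsDiagram q i j k) : qnum (q i i) 3 = 0 := by
  refine (qnum_eq_zero_iff _ 2).2 ⟨?_, ?_⟩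
  · rw [h.self_i]
    exact h.prim.pow_ne_one_of_pos_of_lt (by norm_num) (by norm_num)
  · rw [h.self_i, ← pow_mul, (h.prim.pow_eq_one_iff_dvd _).2 (by norm_num)]

theorem gen_cube_mem_derKer (h : IsDiagram q i j k) : gen θ i ^ 3 ∈ derKer q :=
  gen_pow_mem_derKer h.qnum_self_i

theorem skewDer_xw_iijk (h : IsDiagram q i j k) :
    skewDer q k (xw q [i, i, j, k]) = (1 - qtil q j k) • xw q [i, i, j] :=
  skewDer_xw_append_pair h.jk [i, i] (by simp [h.ik, h.link_ik])

theorem xw_iiij_mem_derKer (h : IsDiagram q i j k) : xw q [i, i, i, j] ∈ derKer q := by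
  refine mem_derKer_of_skewDer_mem (xw_mem_homogD q _) (a := i) (by simp [degW]) fun b => ?_
  rcases eq_or_ne j b with rfl | hb
  · have hcube : gen θ i * (gen θ i * gen θ i) ∈ derKer q := by
      simpa only [pow_succ, pow_zero, one_mul, mul_assoc] using h.gen_cube_mem_derKer
    rw [xw_cons i (by simp), xwBrk, skewDer_brk_of_left_eq_zero (xw_mem_homogD q _)
      (xw_mem_homogD q _) (skewDer_xw_singleton_of_ne h.ij), skewDer_xw_append_pair_self h.ij,
      xw, mul_smul_comm, smul_mul_assoc, mul_assoc]
    exact Submodule.sub_mem _ (Submodule.smul_mem _ _ hcube)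
      (Submodule.smul_mem _ _ (Submodule.smul_mem _ _ hcube))
  · rw [show skewDer q b (xw q [i, i, i, j]) = 0 from skewDer_xw_append_of_ne hb [i, i, i]]
    exact Submodule.zero_mem _

theorem xw_iiijk_mem_derKer (h : IsDiagram q i j k) : xw q [i, i, i, j, k] ∈ derKer q := by
  refine mem_derKer_of_skewDer_mem (xw_mem_homogD q _) (a := i) (by simp [degW]) fun b => ?_
  rcases eq_or_ne k b with rfl | hb
  · rw [show skewDer q k (xw q [i, i, i, j, k]) = (1 - qtil q j k) • xw q [i, i, i, j] from
      skewDer_xw_append_pair h.jk [i, i, i] (by simp [h.ik, h.link_ik])]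
    exact Submodule.smul_mem _ _ h.xw_iiij_mem_derKer
  · rw [show skewDer q b (xw q [i, i, i, j, k]) = 0 from skewDer_xw_append_of_ne hb [i, i, i, j]]
    exact Submodule.zero_mem _

theorem skewDer_xw_ij (h : IsDiagram q i j k) :
    skewDer q j (xw q [i, j]) = (1 - qtil q i j) • gen θ i :=
  skewDer_xw_append_pair h.ij [] (by simp)

theorem skewDer_xwBrk_iij_ij (h : IsDiagram q i j k) :
    ∃ c : ℂ, skewDer q j (xwBrk q [i, i, j] [i, j]) = c • xw q [i, i, i, j] := by
  have hp : 1 + (q i i : ℂ) + (q i i : ℂ) ^ 2 = 0 := by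
    simpa [qnum, Finset.sum_range_succ] using h.qnum_self_i
  have hL : (q i j : ℂ) * q j i * q j j = 1 := by
    rw [h.self_j, ← h.link_ij, ← qtil, mul_inv_cancel₀ (by simp [qtil])]
  refine ⟨qf q (δ θ j) (degW θ [i, j]) * ((1 - qtil q i j) * (1 - q i i * qtil q i j)) -
    qf q (degW θ [i, i, j]) (degW θ [i, j]) * qf q (δ θ j) (degW θ [i, i, j]) *
      (1 - qtil q i j), ?_⟩
  rw [xwBrk, skewDer_brk j (xw_mem_homogD q _) (xw_mem_homogD q _), h.skewDer_xw_ij,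
    skewDer_xw_append_pair_self h.ij]
  simp only [mul_smul_comm, smul_mul_assoc, gen_mul_xw i (List.cons_ne_nil i [i, j]), qtil,
    gen_mul_gen_mul_xw i (List.cons_ne_nil i [j]), degW_cons, degW_nil, qf_add_left,
    qf_add_right, qf_zero_left, qf_zero_right, qf_δ]
  match_scalars
  · linear_combination (1 - (q i j : ℂ) * q j i) * (1 - q i j * q j i * q i i ^ 2) * hp +
      (1 - (q i j : ℂ) * q j i) * ((q i i ^ 2 + q i i) * (1 - q i i * q i j * q j i) -
        q i i ^ 4 * q i j * q j i * (q i j * q j i * q j j + 1)) * hL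
  · ring
  · ring

theorem xwBrk_iij_ij_mem_derKer (h : IsDiagram q i j k) :
    xwBrk q [i, i, j] [i, j] ∈ derKer q := by
  refine mem_derKer_of_skewDer_mem (xwBrk_mem_homogD q _ _) (a := i) (by simp [degW]) fun b => ?_
  rcases eq_or_ne j b with rfl | hb
  · obtain ⟨c, hc⟩ := h.skewDer_xwBrk_iij_ij
    rw [hc]
    exact Submodule.smul_mem _ _ h.xw_iiij_mem_derKer
  · rw [xwBrk, skewDer_brk b (xw_mem_homogD q _) (xw_mem_homogD q _),
      show skewDer q b (xw q [i, i, j]) = 0 from skewDer_xw_append_of_ne hb [i, i],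
      show skewDer q b (xw q [i, j]) = 0 from skewDer_xw_append_of_ne hb [i]]
    simp

theorem skewDer_k_xwBrk_iij_iijk (h : IsDiagram q i j k) :
    ∃ c : ℂ, skewDer q k (xwBrk q [i, i, j] [i, i, j, k]) =
      c • (xw q [i, i, j] * xw q [i, i, j]) := by
  refine ⟨(1 - qtil q j k) * (1 - qf q (degW θ [i, i, j]) (degW θ [i, i, j, k]) *
    qf q (δ θ k) (degW θ [i, i, j])), ?_⟩
  have hA : skewDer q k (xw q [i, i, j]) = 0 := skewDer_xw_append_of_ne h.jk [i, i]
  rw [xwBrk, skewDer_brk_of_left_eq_zero (xw_mem_homogD q _) (xw_mem_homogD q _) hA,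
    h.skewDer_xw_iijk, mul_smul_comm, smul_mul_assoc]
  module

theorem skewDer_xwBrk_iij_iijk_mem_derKer (h : IsDiagram q i j k) {b : Fin θ} (hb : k ≠ b) :
    skewDer q b (xwBrk q [i, i, j] [i, i, j, k]) ∈ derKer q := by
  have hC : skewDer q b (xw q [i, i, j, k]) = 0 := skewDer_xw_append_of_ne hb [i, i, j]
  rcases eq_or_ne j b with rfl | hbj
  · have hdeg : degW θ [i, i, j] = δ θ i + δ θ i + δ θ j := by
      simp only [degW_cons, degW_nil, add_zero, add_assoc]
    have hXC : brk q (δ θ i) (degW θ [i, i, j, k]) (gen θ i) (xw q [i, i, j, k]) ∈ derKer q :=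
      h.xw_iiijk_mem_derKer
    rw [xwBrk, hdeg, skewDer_brk_of_right_eq_zero (hdeg ▸ xw_mem_homogD q [i, i, j])
      (xw_mem_homogD q _) hC, skewDer_xw_append_pair_self h.ij, brk_smul_left]
    exact Submodule.smul_mem _ _ (Submodule.smul_mem _ _ (brk_mul_self_mem_derKer hXC))
  · rw [xwBrk, skewDer_brk b (xw_mem_homogD q _) (xw_mem_homogD q _), hC,
      show skewDer q b (xw q [i, i, j]) = 0 from skewDer_xw_append_of_ne hbj [i, i]]
    simp

theorem brk_gen_xwBrk_iij_iijk_mem_derKer (h : IsDiagram q i j k) :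
    brk q (δ θ i) (degW θ [i, i, j] + degW θ [i, i, j, k]) (gen θ i)
      (xwBrk q [i, i, j] [i, i, j, k]) ∈ derKer q :=
  brk_brk_mem_derKer h.xw_iiij_mem_derKer h.xw_iiijk_mem_derKer

theorem qf_degW_iijiijk_eq_one (h : IsDiagram q i j k) :
    qf q (degW θ [i, i, j] + degW θ [i, i, j, k]) (degW θ [i, j]) *
      qf q (δ θ j) (degW θ [i, i, j] + degW θ [i, i, j, k]) *
      qf q (δ θ i) (degW θ [i, i, j] + degW θ [i, i, j, k]) = 1 := by
  have hz : (q k k : ℂ) ≠ 0 := Units.ne_zero _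
  calc _ = (q i i : ℂ) ^ 8 * (q j j : ℂ) ^ 4 * qtil q i j ^ 6 * qtil q i k * qtil q j k := by
        simp only [degW_cons, degW_nil, qf_add_left, qf_add_right, qf_zero_left, qf_zero_right,
          qf_δ, qtil]
        ring
    _ = ((q k k : ℂ) ^ 9) ^ 5 := by
        rw [h.self_i, h.self_j, inv_eq_iff_eq_inv.1 h.link_ij, inv_eq_iff_eq_inv.1 h.link_jk,
          h.link_ik]
        field_simp
    _ = 1 := by rw [h.prim.pow_eq_one, one_pow]

theorem skewDer_j_relation_mem_derKer (h : IsDiagram q i j k) :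
    skewDer q j (brk q (degW θ [i, i, j] + degW θ [i, i, j, k]) (degW θ [i, j])
      (xwBrk q [i, i, j] [i, i, j, k]) (xw q [i, j])) ∈ derKer q := by
  have hD := xwBrk_mem_homogD q [i, i, j] [i, i, j, k]
  have hDj := h.skewDer_xwBrk_iij_iijk_mem_derKer h.jk.symm
  have hXD := h.brk_gen_xwBrk_iij_iijk_mem_derKer
  have hqf := h.qf_degW_iijiijk_eq_one
  rw [degW_append] at hD
  rw [skewDer_brk j hD (xw_mem_homogD q _), h.skewDer_xw_ij]
  generalize xwBrk q [i, i, j] [i, i, j, k] = D at *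
  generalize degW θ [i, i, j] + degW θ [i, i, j, k] = d at *
  have heq : D * ((1 - qtil q i j) • gen θ i) +
        qf q (δ θ j) (degW θ [i, j]) • (skewDer q j D * xw q [i, j]) -
      qf q d (degW θ [i, j]) •
        (xw q [i, j] * skewDer q j D + qf q (δ θ j) d • ((1 - qtil q i j) • gen θ i * D)) =
      qf q (δ θ j) (degW θ [i, j]) • (skewDer q j D * xw q [i, j]) -
        qf q d (degW θ [i, j]) • (xw q [i, j] * skewDer q j D) -
        (qf q d (degW θ [i, j]) * qf q (δ θ j) d * (1 - qtil q i j)) •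
          brk q (δ θ i) d (gen θ i) D := by
    simp only [brk, mul_smul_comm, smul_mul_assoc]
    match_scalars
    · linear_combination (qtil q i j - 1) * hqf
    all_goals ring
  rw [heq]
  exact Submodule.sub_mem _ (Submodule.sub_mem _
    (Submodule.smul_mem _ _ (mul_mem_derKer_right _ hDj))
    (Submodule.smul_mem _ _ (mul_mem_derKer_left _ hDj))) (Submodule.smul_mem _ _ hXD)

theorem skewDer_k_relation_mem_derKer (h : IsDiagram q i j k) :
    skewDer q k (brk q (degW θ [i, i, j] + degW θ [i, i, j, k]) (degW θ [i, j])
      (xwBrk q [i, i, j] [i, i, j, k]) (xw q [i, j])) ∈ derKer q := by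
  have hdeg : degW θ [i, i, j] + degW θ [i, i, j, k] =
      degW θ [i, i, j] + degW θ [i, i, j] + δ θ k := by
    simp only [degW_cons, degW_nil, add_zero, add_assoc]
  have hB : skewDer q k (xw q [i, j]) = 0 := skewDer_xw_append_of_ne h.jk [i]
  have hD := xwBrk_mem_homogD q [i, i, j] [i, i, j, k]
  obtain ⟨c, hc⟩ := h.skewDer_k_xwBrk_iij_iijk
  rw [degW_append, hdeg] at hD
  rw [hdeg, skewDer_brk_of_right_eq_zero hD (xw_mem_homogD q _) hB, hc, brk_smul_left]
  exact Submodule.smul_mem _ _ (Submodule.smul_mem _ _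
    (brk_mul_self_mem_derKer h.xwBrk_iij_ij_mem_derKer))

theorem relation_mem_derKer (h : IsDiagram q i j k) :
    brk q (degW θ [i, i, j] + degW θ [i, i, j, k]) (degW θ [i, j])
      (xwBrk q [i, i, j] [i, i, j, k]) (xw q [i, j]) ∈ derKer q := by
  have hD := xwBrk_mem_homogD q [i, i, j] [i, i, j, k]
  have hB := xw_mem_homogD q [i, j]
  rw [degW_append] at hD
  refine mem_derKer_of_skewDer_mem (brk_mem_homogD q hD hB _ _) (a := i) (by simp [degW])
    fun b => ?_
  rcases eq_or_ne k b with rfl | hk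
  · exact h.skewDer_k_relation_mem_derKer
  rcases eq_or_ne j b with rfl | hj
  · exact h.skewDer_j_relation_mem_derKer
  have hDb := h.skewDer_xwBrk_iij_iijk_mem_derKer hk
  rw [skewDer_brk b hD hB,
    show skewDer q b (xw q [i, j]) = 0 from skewDer_xw_append_of_ne hj [i]]
  simp only [mul_zero, zero_mul, smul_zero, add_zero, zero_add]
  exact Submodule.sub_mem _ (Submodule.smul_mem _ _ (mul_mem_derKer_right _ hDb))
    (Submodule.smul_mem _ _ (mul_mem_derKer_left _ hDb))

end IsDiagram

theorem statement_7_general {θ : ℕ} {q : Fin θ → Fin θ → ℂˣ} {S : BraidedStr θ q}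
    {I : Submodule ℂ (TV θ)} {i j k : Fin θ} (hAAH : AAHOfRank 2)
    (hI : IsPreNicholsIdeal S I) (hGK : FinGK I) (h : IsDiagram q i j k) :
    brk q (δ θ i + δ θ i + δ θ j + (δ θ i + δ θ i + δ θ j + δ θ k)) (δ θ i + δ θ j)
      (brk q (δ θ i + δ θ i + δ θ j) (δ θ i + δ θ i + δ θ j + δ θ k)
        (xw q [i, i, j]) (xw q [i, i, j, k]))
      (xw q [i, j]) ∈ I := by
  have hJ := h.relation_mem_derKer
  have hdeg : degW θ ([i, i, j] ++ [i, i, j, k]) + degW θ [i, j] =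
      5 • δ θ i + 3 • δ θ j + 1 • δ θ k := by
    simp only [List.cons_append, List.nil_append, degW_cons, degW_nil]
    module
  have hmem := brk_mem_homogD q (xwBrk_mem_homogD q [i, i, j] [i, i, j, k])
    (xw_mem_homogD q [i, j]) (degW θ [i, i, j] + degW θ [i, i, j, k]) (degW θ [i, j])
  have := derKer_inf_homogD_le h hAAH hI hGK hdeg.le ⟨hJ, hmem⟩
  simpa only [xwBrk, degW_cons, degW_nil, add_zero, add_assoc] using this

/-- Lemma 3.3: if `q_{kk} = q_{jj} = q̃_{ij}⁻¹ = q̃_{jk}⁻¹ ∈ G₉'`,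
`q̃_{ik} = 1` and `q_{ii} = q_{kk}⁶`, then `[[x_{iij}, x_{iijk}]_c, x_{ij}]_c = 0`
in every finite-GKdim pre-Nichols algebra of `q`. -/
theorem statement_7 (θ : ℕ) (q : Fin θ → Fin θ → ℂˣ) (S : BraidedStr θ q)
    (hconn : (dynkin q).Connected)
    (hfd : FiniteDimensional ℂ (TV θ ⧸ Jq S))
    (hAAH : AAH)
    (I : Submodule ℂ (TV θ)) (hI : IsPreNicholsIdeal S I) (hGK : FinGK I)
    (i j k : Fin θ) (hij : i ≠ j) (hik : i ≠ k) (hjk : j ≠ k)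
    (h1 : IsPrimitiveRoot (q k k : ℂ) 9)
    (h2 : (q j j : ℂ) = (q k k : ℂ))
    (h3 : (qtil q i j)⁻¹ = (q k k : ℂ))
    (h4 : (qtil q j k)⁻¹ = (q k k : ℂ))
    (h5 : qtil q i k = 1)
    (h6 : (q i i : ℂ) = (q k k : ℂ) ^ 6) :
    brk q (δ θ i + δ θ i + δ θ j + (δ θ i + δ θ i + δ θ j + δ θ k)) (δ θ i + δ θ j)
      (brk q (δ θ i + δ θ i + δ θ j) (δ θ i + δ θ i + δ θ j + δ θ k)
        (xw q [i, i, j]) (xw q [i, i, j, k]))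
      (xw q [i, j]) ∈ I :=
  statement_7_general (hAAH 2) hI hGK ⟨h1, h2, h3, h4, h5, h6⟩

end PreNicholsPaper
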